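/- arXiv:1608.02009 — 5 statements merged into one kernel-verified Lean document; each statement's English description precedes it below -/
import Mathlib

section
/- Let n ≥ 1. The global self-similar Minkowski dimension of the integer lattice points with positive coordinates satisfies dim_LG(ℕⁿ) = n, where ℕⁿ = ℕ × ⋯ × ℕ ⊂ ℝⁿ. -/
/-!
Write `t = r_B / r`. A ball of radius `r_B` lies in a cube of edge `2 r_B`, hence is covered by
`(⌊2t⌋ + 1)ⁿ ≤ (3t)ⁿ` cubes of edge `r`; so every ratio with `t ≥ N > 1` is at most
`n (1 + log 3 / log N)` (`ratio_le`), for any set `E` whatsoever. Conversely, a cube of edge `1/2`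
contains at most one lattice point, and the ball about `0` of radius `(n + 1) K` contains the `Kⁿ`
lattice points with coordinates in `{1, …, K}`; so with `r = 1/2` the ratio is at least
`n log K / log (2 (n + 1) K)` (`pow_le_Ncov_lattice`), which tends to `n` as `K → ∞` while
`t = 2 (n + 1) K → ∞`. Thus for every `N > 1` the supremum lies between `n` and
`n (1 + log 3 / log N)`, and it converges to `n` as `N → ∞`.
-/

open MeasureTheory Metric Filter Set ENNReal NNReal

noncomputable section

/-- Points of `ℝⁿ`. -/
abbrev Pt (n : ℕ) := EuclideanSpace ℝ (Fin n)

/-- The axis-parallel closed cube with lower corner `c` and edge length `r`. -/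
def closedCube {n : ℕ} (c : Pt n) (r : ℝ) : Set (Pt n) :=
  {x | ∀ i, c i ≤ x i ∧ x i ≤ c i + r}

/-- `Ncov r E`: the minimal number of axis-parallel closed cubes of edge length `r`
needed to cover `E` (junk value `0` if no finite cover exists). -/
def Ncov {n : ℕ} (r : ℝ) (E : Set (Pt n)) : ℕ :=
  sInf {m : ℕ | ∃ s : Finset (Pt n), s.card = m ∧ E ⊆ ⋃ c ∈ s, closedCube c r}

/-- Upper Minkowski dimension (intended for bounded sets). -/
def dimM {n : ℕ} (F : Set (Pt n)) : ℝ :=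
  limsup (fun r : ℝ => Real.log (Ncov r F) / Real.log (1 / r)) (nhdsWithin 0 (Ioi 0))

/-- The set of ratios `log N_cov(r, E ∩ B) / log (r_B / r)` over balls `B = B(x, r_B)`
with `N * r ≤ r_B ≤ R`. -/
def locRatios {n : ℕ} (E : Set (Pt n)) (N r R : ℝ) : Set ℝ :=
  {d | ∃ (x : Pt n) (rB : ℝ), 0 < rB ∧ N * r ≤ rB ∧ rB ≤ R ∧
        d = Real.log (Ncov r (E ∩ ball x rB)) / Real.log (rB / r)}

/-- The local self-similar Minkowski dimension. -/
def dimLoc {n : ℕ} (E : Set (Pt n)) : ℝ :=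
  liminf (fun N : ℝ =>
    limsup (fun r : ℝ => sSup (locRatios E N r 1)) (nhdsWithin 0 (Ioi 0))) atTop

/-- The global self-similar Minkowski dimension. -/
def dimGlob {n : ℕ} (E : Set (Pt n)) : ℝ :=
  liminf (fun N : ℝ =>
    sSup {d : ℝ | ∃ r : ℝ, 0 < r ∧ ∃ (x : Pt n) (rB : ℝ), 0 < rB ∧ N * r ≤ rB ∧
      d = Real.log (Ncov r (E ∩ ball x rB)) / Real.log (rB / r)}) atTop

/-- The `Q_α`-energy `Φ_α(u, B(x₀,r)) = |B|^{2α/n-1} ∬_{B×B} |u(x)-u(y)|²/|x-y|^{n+2α}`. -/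
def Phi {n : ℕ} (α : ℝ) (u : Pt n → ℝ) (x₀ : Pt n) (r : ℝ) : ℝ≥0∞ :=
  (volume (ball x₀ r)) ^ (2 * α / (n : ℝ) - 1) *
    ∫⁻ x in ball x₀ r, ∫⁻ y in ball x₀ r,
      ENNReal.ofReal (|u x - u y| ^ 2 / ‖x - y‖ ^ ((n : ℝ) + 2 * α))

/-- The `Q_α`-norm of `u`. -/
def Qnorm {n : ℕ} (α : ℝ) (u : Pt n → ℝ) : ℝ≥0∞ :=
  ⨆ (x₀ : Pt n) (r : ℝ) (_ : 0 < r),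
    (ENNReal.ofReal (r ^ (2 * α - (n : ℝ))) *
      ∫⁻ x in ball x₀ r, ∫⁻ y in ball x₀ r,
        ENNReal.ofReal (|u x - u y| ^ 2 / ‖x - y‖ ^ ((n : ℝ) + 2 * α))) ^ (1/2 : ℝ)

/-- Membership in `Q_α(ℝⁿ)`: `u ∈ L²_loc` and the `Q_α`-norm is finite. -/
def MemQ {n : ℕ} (α : ℝ) (u : Pt n → ℝ) : Prop :=
  LocallyIntegrable (fun x => |u x| ^ 2) volume ∧ Qnorm α u < ⊤

/-- `Ψ_{α,q}(u, B(x₀,r))`. -/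
def Psi {n : ℕ} (α q : ℝ) (u : Pt n → ℝ) (x₀ : Pt n) (r : ℝ) : ℝ≥0∞ :=
  ∑' k : ℕ, ENNReal.ofReal ((2:ℝ) ^ (2 * (k:ℝ) * α)) *
    ((volume (ball x₀ r))⁻¹ * ∫⁻ x in ball x₀ r,
      ⨅ c : ℝ, ((volume (ball x ((2:ℝ) ^ (-(k:ℝ)) * r)))⁻¹ *
        ∫⁻ z in ball x ((2:ℝ) ^ (-(k:ℝ)) * r), ENNReal.ofReal (|u z - c| ^ q)) ^ (2 / q))

/-- The quantity `inf_c ( ⨍_{B(x,ρ)} |u - c|^σ )^{1/σ}`. -/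
def oscAvg {n : ℕ} (σ : ℝ) (u : Pt n → ℝ) (x : Pt n) (ρ : ℝ) : ℝ≥0∞ :=
  ⨅ c : ℝ, ((volume (ball x ρ))⁻¹ *
    ∫⁻ w in ball x ρ, ENNReal.ofReal (|u w - c| ^ σ)) ^ (1/σ)

/-- `f` is `η`-quasisymmetric, where the homeomorphism `η` of `[0,∞)` is encoded as an
order isomorphism of `ℝ≥0`. -/
def IsQS {n : ℕ} (f : Pt n → Pt n) (η : ℝ≥0 ≃o ℝ≥0) : Prop :=
  ∀ x a b : Pt n, x ≠ b →
    nndist (f x) (f a) ≤ η (nndist x a / nndist x b) * nndist (f x) (f b)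

/-- The local Muckenhoupt class `A₁(ℝⁿ; S)`: the `A₁` condition holds on every ball
`B(x₀,r)` with `2r < dist(x₀, S)`. -/
def MemA1 {n : ℕ} (w : Pt n → ℝ) (S : Set (Pt n)) : Prop :=
  ∃ C > 0, ∀ (x₀ : Pt n) (r : ℝ), 0 < r →
    ENNReal.ofReal (2 * r) < EMetric.infEdist x₀ S →
    ⨍ x in ball x₀ r, w x ∂volume ≤ C * essInf w (volume.restrict (ball x₀ r))

/-- `J` is the a.e. Jacobian of `f` (`J = |det Df|` a.e.) and the change-of-variables
formula holds for all nonnegative measurable integrands. -/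
def JacobianCOV {n : ℕ} (f : Pt n → Pt n) (J : Pt n → ℝ) : Prop :=
  (∀ᵐ x ∂(volume : Measure (Pt n)), ∃ D : Pt n →L[ℝ] Pt n,
      HasFDerivAt f D x ∧ J x = |D.det|) ∧
  ∀ g : Pt n → ℝ≥0∞, Measurable g →
    ∫⁻ x, g (f x) * ENNReal.ofReal (J x) = ∫⁻ y, g y

/-- The hyperplane `ℝ^{n-1} × {0}` (the last coordinate vanishes). -/
def Hset (n : ℕ) : Set (Pt n) := {x | ∀ i : Fin n, (i : ℕ) = n - 1 → x i = 0}

/-- The open upper half-space (last coordinate positive). -/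
def upperHalf (n : ℕ) : Set (Pt n) := {x | ∀ i : Fin n, (i : ℕ) = n - 1 → 0 < x i}

/-- The open lower half-space (last coordinate negative). -/
def lowerHalf (n : ℕ) : Set (Pt n) := {x | ∀ i : Fin n, (i : ℕ) = n - 1 → x i < 0}

/-- The hyperbolic length `∫₀¹ |γ'(t)|/dist(γ(t),H) dt` of a curve `γ`. -/
def hypLen {n : ℕ} (H : Set (Pt n)) (γ : ℝ → Pt n) : ℝ :=
  ∫ t in (0:ℝ)..1, ‖deriv γ t‖ / Metric.infDist (γ t) H

/-- The hyperbolic-type distance associated with the set `H`: the infimum of hyperbolic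
lengths of differentiable curves joining `z` and `w` in the complement of `H`. -/
def hypDist {n : ℕ} (H : Set (Pt n)) (z w : Pt n) : ℝ :=
  sInf {L : ℝ | ∃ γ : ℝ → Pt n, γ 0 = z ∧ γ 1 = w ∧
    (∀ t ∈ Icc (0:ℝ) 1, DifferentiableAt ℝ γ t ∧ γ t ∉ H) ∧ L = hypLen H γ}

/-- `L_f(z,t) = sup { |f(z)-f(w)| : |z-w| ≤ t }`. -/
def Lf {n : ℕ} (f : Pt n → Pt n) (z : Pt n) (t : ℝ) : ℝ :=
  sSup ((fun w => dist (f z) (f w)) '' closedBall z t)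

/-- The grid cover: a set inside a ball of radius `R` is covered by `(⌊2R/r⌋ + 1)ⁿ` cubes of
edge `r`. -/
lemma exists_grid_cover {n : ℕ} (E : Set (Pt n)) (x : Pt n) {r R : ℝ} (hr : 0 < r) :
    ∃ s : Finset (Pt n), s.card ≤ (⌊2 * R / r⌋₊ + 1) ^ n ∧
      E ∩ ball x R ⊆ ⋃ c ∈ s, closedCube c r := by
  classical
  set M := ⌊2 * R / r⌋₊ with hM
  let g : (Fin n → Fin (M + 1)) → Pt n :=
    fun f => WithLp.toLp 2 (fun i => x i - R + r * ((f i : ℕ) : ℝ))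
  refine ⟨Finset.univ.image g, ?_, ?_⟩
  · refine Finset.card_image_le.trans ?_
    simp
  · rintro y ⟨-, hy⟩
    have hc : ∀ i, |y i - x i| < R := fun i => by
      have h1 : ‖(y - x) i‖ ≤ ‖y - x‖ := PiLp.norm_apply_le (y - x) i
      rw [mem_ball, dist_eq_norm] at hy
      simpa [Real.norm_eq_abs] using h1.trans_lt hy
    have h0 : ∀ i, 0 ≤ (y i - x i + R) / r := fun i => by
      have := (abs_lt.1 (hc i)).1
      exact div_nonneg (by linarith) hr.le
    have hlt : ∀ i, ⌊(y i - x i + R) / r⌋₊ < M + 1 := fun i => by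
      have := (abs_lt.1 (hc i)).2
      refine Nat.lt_succ_of_le (Nat.floor_mono ?_)
      gcongr
      linarith
    refine mem_iUnion₂.2 ⟨g (fun i => ⟨_, hlt i⟩), by simp, fun i => ?_⟩
    have h1 := Nat.floor_le (h0 i)
    have h2 := (Nat.lt_floor_add_one ((y i - x i + R) / r)).le
    rw [le_div_iff₀ hr] at h1
    rw [div_le_iff₀ hr] at h2
    simp only [g]
    constructor <;> linarith

lemma ratio_le {n : ℕ} (E : Set (Pt n)) (x : Pt n) {N r R : ℝ} (hN : 1 < N) (hr : 0 < r)
    (hR : N * r ≤ R) :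
    Real.log (Ncov r (E ∩ ball x R)) / Real.log (R / r) ≤ n * (1 + Real.log 3 / Real.log N) := by
  obtain ⟨s, hs, hcov⟩ := exists_grid_cover E x (R := R) hr
  have hle : Ncov r (E ∩ ball x R) ≤ (⌊2 * R / r⌋₊ + 1) ^ n :=
    le_trans (Nat.sInf_le ⟨s, rfl, hcov⟩) hs
  have ht : N ≤ R / r := (le_div_iff₀ hr).2 hR
  set t := R / r with htdef
  have hlN : 0 < Real.log N := Real.log_pos hN
  have hlt : Real.log N ≤ Real.log t := Real.log_le_log (by linarith) ht
  have hl3 : 0 < Real.log 3 := Real.log_pos (by norm_num)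
  have hfl : ((⌊2 * R / r⌋₊ : ℕ) : ℝ) + 1 ≤ 3 * t := by
    have : ((⌊2 * R / r⌋₊ : ℕ) : ℝ) ≤ 2 * R / r := by
      apply Nat.floor_le
      rw [mul_div_assoc]
      linarith
    have h2 : 2 * R / r = 2 * t := mul_div_assoc _ _ _
    linarith
  have hNle : (Ncov r (E ∩ ball x R) : ℝ) ≤ (3 * t) ^ n :=
    calc (Ncov r (E ∩ ball x R) : ℝ) ≤ (((⌊2 * R / r⌋₊ : ℕ) : ℝ) + 1) ^ n := by exact_mod_cast hle
      _ ≤ (3 * t) ^ n := by gcongr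
  have hlog : Real.log (Ncov r (E ∩ ball x R)) ≤ n * (Real.log 3 + Real.log t) := by
    rw [← Real.log_mul (by norm_num) (by linarith), ← Real.log_pow]
    rcases Nat.eq_zero_or_pos (Ncov r (E ∩ ball x R)) with h | h
    · rw [h]
      simpa using Real.log_nonneg (one_le_pow₀ (by linarith : (1 : ℝ) ≤ 3 * t))
    · exact Real.log_le_log (by exact_mod_cast h) hNle
  rw [div_le_iff₀ (hlN.trans_le hlt)]
  refine hlog.trans ?_
  rw [mul_assoc]
  gcongr
  have : Real.log 3 ≤ Real.log 3 / Real.log N * Real.log t := by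
    rw [div_mul_eq_mul_div, le_div_iff₀ hlN]
    gcongr
  linarith

/-- The `Kⁿ` lattice points of `{1, …, K}ⁿ` lie in `B(0, (n + 1) K)`, and no two of them share a
cube of edge `1/2`. -/
lemma pow_le_Ncov_lattice (n K : ℕ) (hK : 0 < K) :
    K ^ n ≤ Ncov (1 / 2) ({x : Pt n | ∀ i, ∃ m : ℕ, 0 < m ∧ x i = (m : ℝ)} ∩
      ball 0 ((n + 1) * K)) := by
  set E := {x : Pt n | ∀ i, ∃ m : ℕ, 0 < m ∧ x i = (m : ℝ)}
  -- The family of finite covers is nonempty, so the infimum is attained and is not the junk `0`.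
  have hne : {m : ℕ | ∃ s : Finset (Pt n), s.card = m ∧
      E ∩ ball 0 ((n + 1) * K) ⊆ ⋃ c ∈ s, closedCube c (1 / 2)}.Nonempty := by
    obtain ⟨s, -, hs⟩ := exists_grid_cover E 0 (R := (n + 1) * K) (r := 1 / 2) (by norm_num)
    exact ⟨_, s, rfl, hs⟩
  obtain ⟨s, hs, hcov⟩ := Nat.sInf_mem hne
  change K ^ n ≤ sInf _
  rw [← hs]
  let p : (Fin n → Fin K) → Pt n := fun f => WithLp.toLp 2 (fun i => (((f i : ℕ) + 1 : ℕ) : ℝ))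
  have hp : ∀ f, p f ∈ E ∩ ball 0 ((n + 1) * K) := fun f => by
    refine ⟨fun i => ⟨(f i : ℕ) + 1, Nat.succ_pos _, rfl⟩, ?_⟩
    have hK' : (0 : ℝ) < K := by exact_mod_cast hK
    rw [mem_ball_zero_iff, EuclideanSpace.norm_eq, Real.sqrt_lt' (by positivity)]
    have : ∑ i, ‖p f i‖ ^ 2 ≤ ∑ _i : Fin n, (K : ℝ) ^ 2 := by
      refine Finset.sum_le_sum fun i _ => ?_
      have h1 : (((f i : ℕ) + 1 : ℕ) : ℝ) ≤ K := by exact_mod_cast (f i).2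
      have h2 : ‖p f i‖ = (((f i : ℕ) + 1 : ℕ) : ℝ) := by
        simp only [p, Real.norm_natCast]
      rw [h2]
      gcongr
    refine this.trans_lt ?_
    rw [Finset.sum_const, Finset.card_univ, Fintype.card_fin, nsmul_eq_mul, mul_pow]
    gcongr
    nlinarith [(Nat.cast_nonneg n : (0 : ℝ) ≤ n)]
  have hc : ∀ f, ∃ c : s, p f ∈ closedCube (c : Pt n) (1 / 2) := fun f => by
    obtain ⟨c, hcs, h⟩ := mem_iUnion₂.1 (hcov (hp f))
    exact ⟨⟨c, hcs⟩, h⟩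
  choose c hc using hc
  have hinj : Function.Injective c := fun f g hfg => by
    funext i
    have h1 := hc f i
    have h2 := hc g i
    rw [← hfg] at h2
    simp only [p] at h1 h2
    have h3 : ((f i : ℕ) : ℝ) < (g i : ℕ) + 1 := by
      push_cast at h1 h2; linarith [h1.2, h2.1]
    have h4 : ((g i : ℕ) : ℝ) < (f i : ℕ) + 1 := by
      push_cast at h1 h2; linarith [h2.2, h1.1]
    have h3' : (f i : ℕ) < g i + 1 := by exact_mod_cast h3
    have h4' : (g i : ℕ) < f i + 1 := by exact_mod_cast h4
    exact Fin.ext (by omega)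
  simpa using Fintype.card_le_of_injective c hinj

/-- `dim_LG (ℕⁿ) = n`, where `ℕⁿ` is the set of lattice points with positive
integer coordinates. -/
theorem dimGlob_natLattice (n : ℕ) (hn : 1 ≤ n) :
    dimGlob {x : Pt n | ∀ i, ∃ m : ℕ, 0 < m ∧ x i = (m : ℝ)} = (n : ℝ) := by
  set E := {x : Pt n | ∀ i, ∃ m : ℕ, 0 < m ∧ x i = (m : ℝ)} with hE
  set S : ℝ → Set ℝ := fun N => {d : ℝ | ∃ r : ℝ, 0 < r ∧ ∃ (x : Pt n) (rB : ℝ), 0 < rB ∧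
    N * r ≤ rB ∧ d = Real.log (Ncov r (E ∩ ball x rB)) / Real.log (rB / r)} with hS
  have hub : ∀ N : ℝ, 1 < N → ∀ d ∈ S N, d ≤ n * (1 + Real.log 3 / Real.log N) := by
    rintro N hN d ⟨r, hr, x, R, -, hR, rfl⟩
    exact ratio_le E x hN hr hR
  have hlb : ∀ N : ℝ, 1 < N → (n : ℝ) ≤ sSup (S N) := by
    intro N hN
    have hlogK : Tendsto (fun K : ℕ => Real.log (K : ℝ)) atTop atTop :=
      Real.tendsto_log_atTop.comp tendsto_natCast_atTop_atTop
    set C := Real.log (2 * (n + 1))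
    have hlim : Tendsto (fun K : ℕ => n * (1 - C / (C + Real.log (K : ℝ)))) atTop
        (nhds (n : ℝ)) := by
      have h := (tendsto_const_nhds (x := C)).div_atTop
        (tendsto_atTop_add_const_left atTop C hlogK)
      simpa using (h.const_sub 1).const_mul (n : ℝ)
    refine le_of_tendsto hlim ?_
    filter_upwards [eventually_ge_atTop (max 1 ⌈N⌉₊)] with K hK
    have hK1 : 1 ≤ K := (le_max_left _ _).trans hK
    have hKN : N ≤ K := Nat.ceil_le.1 ((le_max_right _ _).trans hK)
    have hK1' : (1 : ℝ) ≤ K := by exact_mod_cast hK1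
    have hn0 : (0 : ℝ) ≤ n := Nat.cast_nonneg n
    have hmem : Real.log (Ncov (1 / 2) (E ∩ ball 0 ((n + 1) * K))) /
        Real.log ((n + 1) * K / (1 / 2)) ∈ S N :=
      ⟨1 / 2, by norm_num, 0, (n + 1) * K, by positivity, by nlinarith, rfl⟩
    refine le_trans ?_ (le_csSup ⟨_, hub N hN⟩ hmem)
    have hden : Real.log (((n : ℝ) + 1) * K / (1 / 2)) = C + Real.log K := by
      rw [← Real.log_mul (by positivity) (by positivity)]
      congr 1
      ring
    have hC : 0 < C := Real.log_pos (by linarith)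
    have hlK : 0 ≤ Real.log (K : ℝ) := Real.log_nonneg hK1'
    have hnum : n * Real.log K ≤ Real.log (Ncov (1 / 2) (E ∩ ball 0 ((n + 1) * K))) := by
      rw [← Real.log_pow]
      exact Real.log_le_log (by positivity) (by exact_mod_cast pow_le_Ncov_lattice n K hK1)
    rw [hden, le_div_iff₀ (by linarith)]
    refine le_trans (le_of_eq ?_) hnum
    field_simp
    ring
  have hlim : Tendsto (fun N : ℝ => n * (1 + Real.log 3 / Real.log N)) atTop (nhds (n : ℝ)) := by
    have h := (tendsto_const_nhds (x := Real.log 3)).div_atTop Real.tendsto_log_atTop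
    simpa using (h.const_add 1).const_mul (n : ℝ)
  have hT : Tendsto (fun N => sSup (S N)) atTop (nhds (n : ℝ)) := by
    refine tendsto_of_tendsto_of_tendsto_of_le_of_le' tendsto_const_nhds hlim ?_ ?_
    · filter_upwards [eventually_gt_atTop 1] with N hN using hlb N hN
    · filter_upwards [eventually_gt_atTop 1] with N hN
      have hne : (S N).Nonempty :=
        ⟨_, 1, one_pos, 0, N, by linarith, by linarith, rfl⟩
      exact csSup_le hne (hub N hN)
  exact hT.liminf_eq

end
end

section
/- Let n ≥ 1 and θ ∈ [0,1]. Then the local self-similar Minkowski dimension of the n-fold product (2^{ℕ_θ})ⁿ satisfies dim_L((2^{ℕ_θ})ⁿ) = 0. -/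
/-!
All points of the set have integer coordinates, and the balls entering `dimLoc` have radius at
most `1`. Such a ball meets at most `2 ^ n` integer points, so `Ncov r (E ∩ B) ≤ 2 ^ n` for every
`r > 0` (`Ncov_integer_points_le`). Since `r_B / r ≥ N`, every ratio lies between `0` and
`log (2 ^ n) / log N` (`sSup_locRatios_mem_Icc`), and this bound tends to `0` as `N → ∞`.
-/

open MeasureTheory Metric Filter Set ENNReal NNReal

noncomputable section

/-- The set `2^{ℕ_θ} = ⋃_{k ≥ 0} {2^k, 2^k + 1, …, 2^k + 2^⌊θk⌋} ⊆ ℕ`. -/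
def twoNTheta (θ : ℝ) : Set ℕ :=
  {m : ℕ | ∃ k : ℕ, 2 ^ k ≤ m ∧ m ≤ 2 ^ k + 2 ^ (Nat.floor (θ * k))}

/-- An open ball of radius at most `1` meets at most two integers in each coordinate direction,
so at most `2 ^ n` cubes are needed, one with its lower corner at each integer point. -/
lemma Ncov_integer_points_le {n : ℕ} (E : Set (Pt n))
    (hE : ∀ y ∈ E, ∀ i, ∃ m : ℕ, y i = (m : ℝ)) (x : Pt n) (rB r : ℝ) (hrB : rB ≤ 1)
    (hr : 0 < r) : Ncov r (E ∩ ball x rB) ≤ 2 ^ n := by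
  classical
  let c : (Fin n → Fin 2) → Pt n :=
    fun f => WithLp.toLp 2 (fun i => (⌊x i⌋ : ℝ) + ((f i : ℕ) : ℝ))
  have hcard : (Finset.univ.image c).card ≤ 2 ^ n := by
    refine Finset.card_image_le.trans ?_
    simp
  refine le_trans (Nat.sInf_le ⟨Finset.univ.image c, rfl, ?_⟩) hcard
  rintro y ⟨hyE, hyB⟩
  have key : ∀ i, ∃ k : Fin 2, y i = (⌊x i⌋ : ℝ) + ((k : ℕ) : ℝ) := by
    intro i
    obtain ⟨m, hm⟩ := hE y hyE i
    have hd : |y i - x i| < 1 := by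
      have h1 : ‖(y - x) i‖ ≤ ‖y - x‖ := PiLp.norm_apply_le (y - x) i
      have h2 : ‖y - x‖ < rB := by simpa [dist_eq_norm] using hyB
      have h3 : ‖(y - x) i‖ = |y i - x i| := by simp [Real.norm_eq_abs]
      linarith
    rw [abs_lt, hm] at hd
    have hf1 := Int.floor_le (x i)
    have hf2 := Int.lt_floor_add_one (x i)
    have hlo : ⌊x i⌋ < (m : ℤ) + 1 := by
      have : (⌊x i⌋ : ℝ) < (m : ℝ) + 1 := by linarith
      exact_mod_cast this
    have hhi : (m : ℤ) < ⌊x i⌋ + 2 := by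
      have : (m : ℝ) < (⌊x i⌋ : ℝ) + 2 := by linarith
      exact_mod_cast this
    have hcases : (m : ℤ) = ⌊x i⌋ ∨ (m : ℤ) = ⌊x i⌋ + 1 := by omega
    rcases hcases with h | h
    · refine ⟨0, ?_⟩
      rw [hm]
      have : (m : ℝ) = (⌊x i⌋ : ℝ) := by exact_mod_cast h
      simpa using this
    · refine ⟨1, ?_⟩
      rw [hm]
      have : (m : ℝ) = (⌊x i⌋ : ℝ) + 1 := by exact_mod_cast h
      simpa using this
  choose f hf using key
  simp only [mem_iUnion]
  refine ⟨c f, Finset.mem_image_of_mem c (Finset.mem_univ f), fun i => ?_⟩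
  have : c f i = y i := (hf i).symm
  rw [this]
  exact ⟨le_rfl, by linarith⟩

lemma sSup_locRatios_mem_Icc {n : ℕ} (E : Set (Pt n))
    (hE : ∀ y ∈ E, ∀ i, ∃ m : ℕ, y i = (m : ℝ)) {N r : ℝ} (hN : 1 < N) (hr : 0 < r) :
    sSup (locRatios E N r 1) ∈ Icc 0 (Real.log (2 ^ n) / Real.log N) := by
  have hlogN : 0 < Real.log N := Real.log_pos hN
  have hC : 0 ≤ Real.log ((2 : ℝ) ^ n) := Real.log_nonneg (one_le_pow₀ (by norm_num))
  have hden : ∀ rB, N * r ≤ rB → Real.log N ≤ Real.log (rB / r) := fun rB h =>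
    Real.log_le_log (by linarith) ((le_div_iff₀ hr).2 h)
  constructor
  · refine Real.sSup_nonneg ?_
    rintro d ⟨x, rB, -, h, -, rfl⟩
    exact div_nonneg (Real.log_natCast_nonneg _) (hlogN.le.trans (hden rB h))
  · refine Real.sSup_le ?_ (by positivity)
    rintro d ⟨x, rB, -, h, h1, rfl⟩
    refine div_le_div₀ hC ?_ hlogN (hden rB h)
    have hle := Ncov_integer_points_le E hE x rB r h1 hr
    -- `Ncov` may vanish (empty intersection), where `Real.log 0 = 0`.
    rcases Nat.eq_zero_or_pos (Ncov r (E ∩ ball x rB)) with h0 | h0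
    · simpa [h0] using hC
    · exact Real.log_le_log (by exact_mod_cast h0) (by exact_mod_cast hle)

/-- `dim_L ((2^{ℕ_θ})ⁿ) = 0` for `θ ∈ [0,1]`. -/
theorem dimLoc_twoNTheta (n : ℕ) (hn : 1 ≤ n) (θ : ℝ) (hθ : θ ∈ Icc (0:ℝ) 1) :
    dimLoc {x : Pt n | ∀ i, ∃ m ∈ twoNTheta θ, x i = (m : ℝ)} = 0 := by
  set E : Set (Pt n) := {x : Pt n | ∀ i, ∃ m ∈ twoNTheta θ, x i = (m : ℝ)} with hEdef
  have hE : ∀ y ∈ E, ∀ i, ∃ m : ℕ, y i = (m : ℝ) := fun y hy i => by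
    obtain ⟨m, -, hm⟩ := hy i
    exact ⟨m, hm⟩
  have hlim : ∀ N : ℝ, 1 < N →
      limsup (fun r : ℝ => sSup (locRatios E N r 1)) (nhdsWithin 0 (Ioi 0)) ∈
        Icc 0 (Real.log (2 ^ n) / Real.log N) := by
    intro N hN
    have hev : ∀ᶠ r : ℝ in nhdsWithin 0 (Ioi 0),
        sSup (locRatios E N r 1) ∈ Icc 0 (Real.log (2 ^ n) / Real.log N) := by
      filter_upwards [self_mem_nhdsWithin] with r hr
      exact sSup_locRatios_mem_Icc E hE hN hr
    have hbdd : IsBoundedUnder (· ≤ ·) (nhdsWithin (0 : ℝ) (Ioi 0))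
        (fun r : ℝ => sSup (locRatios E N r 1)) :=
      isBoundedUnder_of_eventually_le (hev.mono fun _ h => h.2)
    have hbdd' : IsBoundedUnder (· ≥ ·) (nhdsWithin (0 : ℝ) (Ioi 0))
        (fun r : ℝ => sSup (locRatios E N r 1)) :=
      isBoundedUnder_of_eventually_ge (hev.mono fun _ h => h.1)
    exact ⟨le_limsup_of_frequently_le (hev.mono fun _ h => h.1).frequently hbdd,
      limsup_le_of_le hbdd'.isCoboundedUnder_le (hev.mono fun _ h => h.2)⟩
  have hzero : Tendsto (fun N : ℝ => Real.log (2 ^ n) / Real.log N) atTop (nhds 0) :=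
    Real.tendsto_log_atTop.const_div_atTop _
  refine Tendsto.liminf_eq
    (tendsto_of_tendsto_of_tendsto_of_le_of_le' tendsto_const_nhds hzero ?_ ?_)
  · filter_upwards [eventually_gt_atTop 1] with N hN using (hlim N hN).1
  · filter_upwards [eventually_gt_atTop 1] with N hN using (hlim N hN).2

end
end

section
/- Let n ≥ 1 and a ∈ (0,1). Then dim_M E_a = dim_L E_a = dim_L ℰ_a = dim_LG E_a = dim_LG ℰ_a = n·log 2 / log(2/(1−a)) (equivalently n/log₂(2/(1−a))). -/
/-!
Write `l = (1-a)/2 < 1/2`, `σ = log 2 / log (1/l)` and `s = n σ`. All five dimensions follow from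
two covering estimates with the same exponent `s` (collected in `Regular`), valid for every set
between `E_a` and its extension `ℰ_a`:

* `N_cov(r, E ∩ B(x,R)) ≤ C (R/r)^s` for all `x` and all `0 < r ≤ R` (`exists_cover`);
* `N_cov(r, E ∩ B(0,1)) ≥ c r^{-s}` for all small `r` (`card_cover_ge`).

For the upper bound, `E_a` lies in the closure of the product of `n` copies of the set `Sc l` of
all one-dimensional centers. This set satisfies `Sc = {1/2} ∪ l Sc ∪ (l Sc + 1 - l)`, with the
three parts at mutual distance at least `1/2 - l`. Hence it is covered by `2^{j+1} - 1` intervals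
of length `l^j` (`cov_all`), and a subset of diameter below `l^i (1/2 - l)` lies in one
generation-`i` piece and needs at most `2^{j+1}` intervals of length `l^{i+j}` (`cov_small`).
On bounded sets the dilates `l^{-k} Sc` stabilize, so rescaling carries the bound over to their
union (`cov_T`), and products of one-dimensional covers give cubes in `ℝⁿ`.

For the lower bound, centers of generation `m` are more than `l^m` apart in each coordinate where
their addresses differ (`cen_sep`), so a cube of edge at most `l^m` contains at most one of them.

Taking logarithms, the ratios defining the dimensions are at most `s + log C / log N`, while the
unit ball gives ratios at least `s + log c / log (1/r)`; both bounds tend to `s`.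
-/

open MeasureTheory Metric Filter Set ENNReal NNReal

noncomputable section

/-- The set of centers of all generation-`m` cubes in the Cantor-type construction with
parameter `a`: one-dimensional generation-`m` intervals have length `((1-a)/2)^m`, and a
bit string `b` records at each step whether the left or right child was chosen (the right
child's left endpoint exceeds the parent's by `((1-a)/2)^t (1 - (1-a)/2)` at step `t+1`).
`m = 0` gives the center `(1/2, …, 1/2)` of `[0,1]ⁿ`. -/
def cantorCenters (n : ℕ) (a : ℝ) : Set (Pt n) :=
  {z | ∃ m : ℕ, ∀ i, ∃ b : Fin m → Bool,
    z i = (∑ t : Fin m, if b t then ((1 - a)/2) ^ (t : ℕ) * (1 - (1 - a)/2) else 0)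
          + ((1 - a)/2) ^ m / 2}

/-- The set `E_a`: the closure of the set of all centers. -/
def Ea (n : ℕ) (a : ℝ) : Set (Pt n) := closure (cantorCenters n a)

/-- The self-similar extension `ℰ_a = ⋃_{k ≥ 0} (2/(1-a))^k · E_a`. -/
def calEa (n : ℕ) (a : ℝ) : Set (Pt n) :=
  {y | ∃ k : ℕ, ∃ x ∈ Ea n a, y = ((2 / (1 - a)) ^ k : ℝ) • x}

/-! ### One-dimensional centers -/

/-- Center of the generation-`m` interval addressed by the bit string `b`, for contraction
ratio `l = (1-a)/2`. -/
def cen (l : ℝ) (m : ℕ) (b : Fin m → Bool) : ℝ :=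
  (∑ t : Fin m, if b t then l ^ (t : ℕ) * (1 - l) else 0) + l ^ m / 2

/-- The set of all one-dimensional centers, of every generation. -/
def Sc (l : ℝ) : Set ℝ := {z | ∃ m b, z = cen l m b}

/-- The union of all dilates of `Sc l` by powers of `l⁻¹`. -/
def Tc (l : ℝ) : Set ℝ := {y | ∃ k : ℕ, ∃ w ∈ Sc l, y = l⁻¹ ^ k * w}

/-- `A` can be covered by at most `N` closed intervals of length `r`. -/
def Cov1 (A : Set ℝ) (r : ℝ) (N : ℕ) : Prop :=
  ∃ s : Finset ℝ, s.card ≤ N ∧ ∀ x ∈ A, ∃ c ∈ s, c ≤ x ∧ x ≤ c + r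

theorem cen_zero (l : ℝ) (b : Fin 0 → Bool) : cen l 0 b = 1 / 2 := by
  simp [cen]

theorem cen_succ (l : ℝ) (m : ℕ) (b : Fin (m + 1) → Bool) :
    cen l (m + 1) b = l * cen l m (fun t => b t.succ) + if b 0 then 1 - l else 0 := by
  unfold cen
  rw [Fin.sum_univ_succ, mul_add, Finset.mul_sum]
  have : ∀ t : Fin m, (if b t.succ then l ^ ((t.succ : Fin (m + 1)) : ℕ) * (1 - l) else 0)
      = l * (if b t.succ then l ^ (t : ℕ) * (1 - l) else 0) := by
    intro t
    split_ifs
    · rw [Fin.val_succ]; ring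
    · simp
  rw [Finset.sum_congr rfl (fun t _ => this t)]
  simp only [Fin.val_zero, pow_zero, one_mul]
  ring

theorem cen_bounds {l : ℝ} (h0 : 0 < l) (h1 : l < 1 / 2) (m : ℕ) (b : Fin m → Bool) :
    l ^ m / 2 ≤ cen l m b ∧ cen l m b ≤ 1 - l ^ m / 2 := by
  induction m with
  | zero => rw [cen_zero]; norm_num
  | succ m ih =>
    rw [cen_succ]
    obtain ⟨h2, h3⟩ := ih (fun t => b t.succ)
    have h4 := mul_le_mul_of_nonneg_left h2 h0.le
    have h5 := mul_le_mul_of_nonneg_left h3 h0.le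
    rw [pow_succ']
    split_ifs <;> constructor <;> linarith

/-- Two centers of the same generation are further apart than their intervals are long. -/
theorem cen_sep {l : ℝ} (h0 : 0 < l) (h1 : l < 1 / 2) (m : ℕ) (b b' : Fin m → Bool)
    (hne : b ≠ b') : l ^ m < |cen l m b - cen l m b'| := by
  induction m with
  | zero => exact absurd (Subsingleton.elim _ _) hne
  | succ m ih =>
    rw [cen_succ, cen_succ]
    by_cases h : b 0 = b' 0
    · have hne' : (fun t : Fin m => b t.succ) ≠ fun t => b' t.succ := by
        intro h2
        apply hne
        funext t
        refine Fin.cases h (fun t => congrFun h2 t) t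
      rw [h, add_sub_add_right_eq_sub, ← mul_sub, abs_mul, abs_of_pos h0, pow_succ']
      exact mul_lt_mul_of_pos_left (ih _ _ hne') h0
    · obtain ⟨h2, h3⟩ := cen_bounds h0 h1 m (fun t => b t.succ)
      obtain ⟨h2', h3'⟩ := cen_bounds h0 h1 m (fun t => b' t.succ)
      have h4 := mul_le_mul_of_nonneg_left h2 h0.le
      have h5 := mul_le_mul_of_nonneg_left h3 h0.le
      have h4' := mul_le_mul_of_nonneg_left h2' h0.le
      have h5' := mul_le_mul_of_nonneg_left h3' h0.le
      rw [pow_succ', lt_abs]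
      cases hb : b 0 <;> cases hb' : b' 0
      · simp [hb, hb'] at h
      · right; simp; linarith
      · left; simp; linarith
      · simp [hb, hb'] at h

theorem Sc_bounds {l : ℝ} (h0 : 0 < l) (h1 : l < 1 / 2) {z : ℝ} (hz : z ∈ Sc l) :
    0 < z ∧ z < 1 := by
  obtain ⟨m, b, rfl⟩ := hz
  have := cen_bounds h0 h1 m b
  have h2 : 0 < l ^ m := pow_pos h0 m
  constructor <;> linarith

/-- The self-similar decomposition of the set of centers. -/
theorem Sc_cases {l : ℝ} {z : ℝ} (hz : z ∈ Sc l) :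
    z = 1 / 2 ∨ (∃ w ∈ Sc l, z = l * w) ∨ ∃ w ∈ Sc l, z = l * w + (1 - l) := by
  obtain ⟨m, b, rfl⟩ := hz
  cases m with
  | zero => left; exact cen_zero l b
  | succ m =>
    right
    rw [cen_succ]
    cases hb : b 0
    · left; exact ⟨cen l m fun t => b t.succ, ⟨m, _, rfl⟩, by simp⟩
    · right; exact ⟨cen l m fun t => b t.succ, ⟨m, _, rfl⟩, by simp⟩

theorem pow_mul_cen (l : ℝ) (k m : ℕ) (b : Fin m → Bool) :
    ∃ b' : Fin (m + k) → Bool, l ^ k * cen l m b = cen l (m + k) b' := by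
  induction k with
  | zero => exact ⟨b, by simp⟩
  | succ k ih =>
    obtain ⟨b', hb'⟩ := ih
    refine ⟨Fin.cons false b', ?_⟩
    change _ = cen l (m + k + 1) _
    rw [cen_succ, pow_succ', mul_assoc, hb']
    simp

/-! ### Covering one-dimensional centers -/

/-- All of `Sc l` is covered by fewer than `2 ^ (j + 1)` intervals of length `l ^ j`: the
counts satisfy `W (j + 1) = 2 * W j + 1`. -/
theorem cov_all {l : ℝ} (h0 : 0 < l) (h1 : l < 1 / 2) (j : ℕ) :
    Cov1 (Sc l) (l ^ j) (2 ^ (j + 1) - 1) := by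
  classical
  induction j with
  | zero =>
    refine ⟨{0}, by simp, fun x hx => ⟨0, by simp, ?_⟩⟩
    have := Sc_bounds h0 h1 hx
    rw [pow_zero]
    constructor <;> linarith
  | succ j ih =>
    obtain ⟨s, hs, hc⟩ := ih
    refine ⟨insert (1 / 2) (s.image (fun c => l * c) ∪ s.image (fun c => l * c + (1 - l))),
      ?_, ?_⟩
    · have e1 := Finset.card_insert_le (1 / 2 : ℝ)
        (s.image (fun c => l * c) ∪ s.image (fun c => l * c + (1 - l)))
      have e2 := Finset.card_union_le (s.image (fun c => l * c))
        (s.image (fun c => l * c + (1 - l)))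
      have e3 : (s.image (fun c => l * c)).card ≤ s.card := Finset.card_image_le
      have e4 : (s.image (fun c => l * c + (1 - l))).card ≤ s.card := Finset.card_image_le
      have e5 : 2 ^ (j + 1 + 1) = 2 * 2 ^ (j + 1) := by rw [pow_succ]; ring
      have e6 : 1 ≤ 2 ^ (j + 1) := Nat.one_le_two_pow
      omega
    · intro x hx
      rcases Sc_cases hx with rfl | ⟨w, hw, rfl⟩ | ⟨w, hw, rfl⟩
      · exact ⟨1 / 2, by simp, le_rfl, by have := pow_pos h0 (j + 1); linarith⟩
      · obtain ⟨c, hcs, h2, h3⟩ := hc w hw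
        have h4 := mul_le_mul_of_nonneg_left h2 h0.le
        have h5 := mul_le_mul_of_nonneg_left h3 h0.le
        refine ⟨l * c, ?_, h4, by rw [pow_succ']; linarith⟩
        exact Finset.mem_insert_of_mem (Finset.mem_union_left _ (Finset.mem_image_of_mem _ hcs))
      · obtain ⟨c, hcs, h2, h3⟩ := hc w hw
        have h4 := mul_le_mul_of_nonneg_left h2 h0.le
        have h5 := mul_le_mul_of_nonneg_left h3 h0.le
        refine ⟨l * c + (1 - l), ?_, by linarith, by rw [pow_succ']; linarith⟩
        exact Finset.mem_insert_of_mem (Finset.mem_union_right _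
          (Finset.mem_image.2 ⟨c, hcs, rfl⟩))

theorem Cov1.affine {A : Set ℝ} {r : ℝ} {N : ℕ} (h : Cov1 A r N) {l : ℝ} (h0 : 0 < l) (d : ℝ) :
    Cov1 ((fun w => l * w + d) '' A) (l * r) N := by
  classical
  obtain ⟨s, hs, hc⟩ := h
  refine ⟨s.image (fun c => l * c + d), Finset.card_image_le.trans hs, ?_⟩
  rintro _ ⟨w, hw, rfl⟩
  obtain ⟨c, hcs, h2, h3⟩ := hc w hw
  have h4 := mul_le_mul_of_nonneg_left h2 h0.le
  have h5 := mul_le_mul_of_nonneg_left h3 h0.le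
  exact ⟨l * c + d, Finset.mem_image.2 ⟨c, hcs, rfl⟩, by dsimp only; linarith,
    by dsimp only; linarith⟩

theorem Cov1.mono {A B : Set ℝ} {r r' : ℝ} {N : ℕ} (h : Cov1 A r N) (hBA : B ⊆ A)
    (hr : r ≤ r') : Cov1 B r' N := by
  obtain ⟨s, hs, hc⟩ := h
  refine ⟨s, hs, fun x hx => ?_⟩
  obtain ⟨c, hcs, h2, h3⟩ := hc x (hBA hx)
  exact ⟨c, hcs, h2, by linarith⟩

/-- A set of centers of diameter below `l ^ i * (1/2 - l)` lies in a single generation-`i`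
piece, because the three parts `{1/2}`, `l * Sc`, `l * Sc + (1 - l)` are at mutual distance at
least `1/2 - l`. -/
theorem cov_small {l : ℝ} (h0 : 0 < l) (h1 : l < 1 / 2) (j i : ℕ) (A : Set ℝ) (hA : A ⊆ Sc l)
    (hd : ∀ x ∈ A, ∀ y ∈ A, |x - y| < l ^ i * (1 / 2 - l)) :
    Cov1 A (l ^ (i + j)) (2 ^ (j + 1)) := by
  induction i generalizing A with
  | zero =>
    obtain ⟨s, hs, hc⟩ := (cov_all h0 h1 j).mono hA (r' := l ^ (0 + j)) (by simp)
    exact ⟨s, hs.trans (Nat.sub_le _ _), hc⟩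
  | succ i ih =>
    rcases A.eq_empty_or_nonempty with rfl | ⟨z, hz⟩
    · exact ⟨∅, by simp, by simp⟩
    have hp : l ^ (i + 1) ≤ 1 := pow_le_one₀ h0.le (by linarith)
    have hd' : ∀ x ∈ A, ∀ y ∈ A, |x - y| < 1 / 2 - l := fun x hx y hy =>
      (hd x hx y hy).trans_le (mul_le_of_le_one_left (by linarith) hp)
    -- pulling a one-piece set back by the contraction reduces the generation by one
    have key : ∀ d : ℝ, (∀ x ∈ A, ∃ w ∈ Sc l, x = l * w + d) →
        Cov1 A (l ^ (i + 1 + j)) (2 ^ (j + 1)) := by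
      intro d hAd
      have := (ih {w | w ∈ Sc l ∧ l * w + d ∈ A} (fun w hw => hw.1) ?_).affine h0 d
      · refine this.mono ?_ (by rw [← pow_succ']; exact le_of_eq (by ring))
        intro x hx
        obtain ⟨w, hw, rfl⟩ := hAd x hx
        exact ⟨w, ⟨hw, hx⟩, rfl⟩
      · intro x hx y hy
        have := hd _ hx.2 _ hy.2
        rw [add_sub_add_right_eq_sub, ← mul_sub, abs_mul, abs_of_pos h0, pow_succ', mul_assoc]
          at this
        exact lt_of_mul_lt_mul_left this h0.le
    have scl : ∀ w ∈ Sc l, 0 < l * w ∧ l * w < l := fun w hw => by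
      have := Sc_bounds h0 h1 hw
      exact ⟨mul_pos h0 this.1, mul_lt_of_lt_one_right h0 this.2⟩
    rcases Sc_cases (hA hz) with rfl | ⟨w, hw, rfl⟩ | ⟨w, hw, rfl⟩
    · refine ⟨{1 / 2}, by simpa using Nat.one_le_two_pow, fun x hx => ⟨1 / 2, by simp, ?_⟩⟩
      have h3 := abs_lt.1 (hd' x hx _ hz)
      have h4 : 0 < l ^ (i + 1 + j) := pow_pos h0 _
      rcases Sc_cases (hA hx) with rfl | ⟨v, hv, rfl⟩ | ⟨v, hv, rfl⟩
      · constructor <;> linarith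
      · have := scl v hv; constructor <;> linarith
      · have := scl v hv; constructor <;> linarith
    · refine key 0 fun x hx => ?_
      have h3 := abs_lt.1 (hd' x hx _ hz)
      have := scl w hw
      rcases Sc_cases (hA hx) with rfl | ⟨v, hv, rfl⟩ | ⟨v, hv, rfl⟩
      · linarith
      · exact ⟨v, hv, by simp⟩
      · have := scl v hv; linarith
    · refine key (1 - l) fun x hx => ?_
      have h3 := abs_lt.1 (hd' x hx _ hz)
      have := scl w hw
      rcases Sc_cases (hA hx) with rfl | ⟨v, hv, rfl⟩ | ⟨v, hv, rfl⟩
      · linarith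
      · have := scl v hv; linarith
      · exact ⟨v, hv, rfl⟩

theorem Sc_small {l : ℝ} (h0 : 0 < l) (h1 : l < 1 / 2) (d : ℕ) {w : ℝ} (hw : w ∈ Sc l)
    (hlt : w < l ^ d) : ∃ v ∈ Sc l, w = l ^ d * v := by
  induction d generalizing w with
  | zero => exact ⟨w, hw, by simp⟩
  | succ d ih =>
    have hp : l ^ (d + 1) ≤ l := by
      rw [pow_succ']; exact mul_le_of_le_one_right h0.le (pow_le_one₀ h0.le (by linarith))
    rcases Sc_cases hw with rfl | ⟨v, hv, rfl⟩ | ⟨v, hv, rfl⟩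
    · linarith
    · rw [pow_succ'] at hlt
      obtain ⟨u, hu, rfl⟩ := ih hv (lt_of_mul_lt_mul_left hlt h0.le)
      exact ⟨u, hu, by rw [pow_succ']; ring⟩
    · have := mul_pos h0 (Sc_bounds h0 h1 hv).1
      linarith

/-- The dilates of `Sc l` stabilize on bounded sets. -/
theorem Tc_bdd {l : ℝ} (h0 : 0 < l) (h1 : l < 1 / 2) (K : ℕ) {y : ℝ} (hy : y ∈ Tc l)
    (hlt : y < l⁻¹ ^ K) : ∃ w ∈ Sc l, y = l⁻¹ ^ K * w := by
  obtain ⟨k, w, hw, rfl⟩ := hy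
  have hl : l ≠ 0 := h0.ne'
  rcases le_total k K with h | h
  · obtain ⟨d, rfl⟩ := Nat.exists_eq_add_of_le h
    obtain ⟨m, b, rfl⟩ := hw
    obtain ⟨b', hb'⟩ := pow_mul_cen l d m b
    refine ⟨_, ⟨_, b', rfl⟩, ?_⟩
    rw [← hb', pow_add, inv_pow l d]
    field_simp
  · obtain ⟨d, rfl⟩ := Nat.exists_eq_add_of_le h
    have : w < l ^ d := by
      rw [pow_add, mul_assoc] at hlt
      have h2 : l⁻¹ ^ d * w < 1 := by
        have h3 : 0 < l⁻¹ ^ K := by positivity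
        by_contra hcon
        push Not at hcon
        have := mul_le_mul_of_nonneg_left hcon h3.le
        linarith
      rw [inv_pow, inv_mul_lt_iff₀ (pow_pos h0 d)] at h2
      linarith
    obtain ⟨v, hv, rfl⟩ := Sc_small h0 h1 d hw this
    refine ⟨v, hv, ?_⟩
    rw [pow_add, inv_pow l d]
    field_simp

/-- Scale-invariant covering bound in one dimension. The exponent `j` depends on the ratio
`R / r` only. -/
theorem cov_T {l : ℝ} (h0 : 0 < l) (h1 : l < 1 / 2) {r R : ℝ} (hr : 0 < r) (hrR : r ≤ R) :
    ∃ j : ℕ, l⁻¹ ^ j ≤ 2 / (l ^ 2 * (1 / 2 - l)) * (R / r) ∧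
      ∀ (A : Set ℝ) (M : ℝ), A ⊆ Tc l → (∀ x ∈ A, x < M) →
        (∀ x ∈ A, ∀ y ∈ A, |x - y| < 2 * R) → Cov1 A r (2 ^ (j + 1)) := by
  have hR : 0 < R := hr.trans_le hrR
  have hg : 0 < 1 / 2 - l := by linarith
  obtain ⟨p, hp1, hp2⟩ := exists_nat_pow_near_of_lt_one
    (x := r * l * (1 / 2 - l) / (2 * R)) (y := l) (by positivity) (by
      rw [div_le_one (by positivity)]
      have : l * (1 / 2 - l) ≤ 1 := by nlinarith
      nlinarith) h0 (by linarith)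
  refine ⟨p + 1, ?_, ?_⟩
  · have h2 : (l ^ p)⁻¹ ≤ (r * l * (1 / 2 - l) / (2 * R))⁻¹ :=
      inv_anti₀ (by positivity) hp2
    rw [pow_succ', inv_pow]
    calc l⁻¹ * (l ^ p)⁻¹ ≤ l⁻¹ * (r * l * (1 / 2 - l) / (2 * R))⁻¹ := by gcongr
      _ = _ := by
        have : l ≠ 0 := h0.ne'
        have := hg.ne'
        rw [inv_div]
        field_simp
  · intro A M hA hM hd
    have hL : 1 < l⁻¹ := (one_lt_inv₀ h0).2 (by linarith)
    obtain ⟨K, hK⟩ := pow_unbounded_of_one_lt (max M (2 * R / (1 / 2 - l))) hL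
    have hK1 : M < l⁻¹ ^ K := (le_max_left _ _).trans_lt hK
    have hK2 : 2 * R / (1 / 2 - l) < l⁻¹ ^ K := (le_max_right _ _).trans_lt hK
    have hlK : 0 < l ^ K := pow_pos h0 K
    obtain ⟨i, hi1, hi2⟩ := exists_nat_pow_near_of_lt_one
      (x := 2 * R / (1 / 2 - l) * l ^ K) (y := l) (by positivity) (by
        rw [inv_pow, ← one_div, lt_div_iff₀ hlK] at hK2
        exact hK2.le) h0 (by linarith)
    have hcov := cov_small h0 h1 (p + 1) i {w | w ∈ Sc l ∧ l⁻¹ ^ K * w ∈ A} (fun w hw => hw.1) ?_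
    · have := hcov.affine (l := l⁻¹ ^ K) (by positivity) 0
      refine this.mono ?_ ?_
      · intro x hx
        obtain ⟨w, hw, rfl⟩ := Tc_bdd h0 h1 K (hA hx) ((hM x hx).trans hK1)
        exact ⟨w, ⟨hw, hx⟩, by simp⟩
      · have e1 : l ^ (i + (p + 1)) * l = l ^ (i + 1) * l ^ (p + 1) := by ring
        have e2 : l ^ (i + 1) * l ^ (p + 1) ≤
            (2 * R / (1 / 2 - l) * l ^ K) * (r * l * (1 / 2 - l) / (2 * R)) := by gcongr
        have e3 : (2 * R / (1 / 2 - l) * l ^ K) * (r * l * (1 / 2 - l) / (2 * R))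
            = (l ^ K * r) * l := by
          have : 1 - 2 * l ≠ 0 := by intro h; linarith
          field_simp
        have e4 : l ^ (i + (p + 1)) ≤ l ^ K * r := by
          refine le_of_mul_le_mul_right ?_ h0
          rw [e1, ← e3]; exact e2
        rw [inv_pow, inv_mul_le_iff₀ hlK]
        exact e4
    · intro x hx y hy
      have h2 := hd _ hx.2 _ hy.2
      rw [← mul_sub, abs_mul, abs_of_pos (by positivity), inv_pow, inv_mul_lt_iff₀ hlK] at h2
      have h3 := mul_le_mul_of_nonneg_right hi2 hg.le
      have h4 : 2 * R / (1 / 2 - l) * l ^ K * (1 / 2 - l) = l ^ K * (2 * R) := by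
        have : 1 - 2 * l ≠ 0 := by intro h; linarith
        field_simp
      linarith

/-! ### Covering bounds in `ℝⁿ` -/

/-- The one-dimensional exponent `log 2 / log (1/l)`. -/
def sig (l : ℝ) : ℝ := Real.log 2 / Real.log l⁻¹

theorem log_inv_pos {l : ℝ} (h0 : 0 < l) (h1 : l < 1 / 2) : 0 < Real.log l⁻¹ :=
  Real.log_pos ((one_lt_inv₀ h0).2 (by linarith))

theorem sig_nonneg {l : ℝ} (h0 : 0 < l) (h1 : l < 1 / 2) : 0 ≤ sig l :=
  div_nonneg (Real.log_nonneg (by norm_num)) (log_inv_pos h0 h1).le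

theorem rpow_sig {l : ℝ} (h0 : 0 < l) (h1 : l < 1 / 2) (j : ℕ) :
    (l⁻¹ ^ j) ^ sig l = (2 : ℝ) ^ j := by
  have hp : 0 < l⁻¹ := by positivity
  have h2 : l⁻¹ ^ sig l = 2 := by
    rw [Real.rpow_def_of_pos hp, sig, mul_div_cancel₀ _ (log_inv_pos h0 h1).ne',
      Real.exp_log (by norm_num)]
  rw [← Real.rpow_natCast, ← Real.rpow_mul hp.le, mul_comm, Real.rpow_mul hp.le, h2,
    Real.rpow_natCast]

theorem isClosed_closedCube {n : ℕ} (c : Pt n) (r : ℝ) : IsClosed (closedCube c r) := by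
  have : closedCube c r = ⋂ i, {x : Pt n | c i ≤ x i ∧ x i ≤ c i + r} := by
    ext x; simp [closedCube]
  rw [this]
  refine isClosed_iInter fun i => IsClosed.and ?_ ?_
  · exact isClosed_le continuous_const (by fun_prop)
  · exact isClosed_le (by fun_prop) continuous_const

theorem abs_coord_sub_le {n : ℕ} (x y : Pt n) (i : Fin n) : |x i - y i| ≤ dist x y := by
  rw [EuclideanSpace.dist_eq]
  refine Real.le_sqrt_of_sq_le ?_
  rw [sq_abs, ← sq_abs, ← Real.dist_eq]
  exact Finset.single_le_sum (f := fun i => dist (x i) (y i) ^ 2) (fun _ _ => sq_nonneg _)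
    (Finset.mem_univ i)

/-- Points all of whose coordinates lie in `Tc l`. -/
def boxT (n : ℕ) (l : ℝ) : Set (Pt n) := {z | ∀ i, z i ∈ Tc l}

/-- Covers of the coordinate projections multiply to a cover of the box; taking closures is free
because balls are open and cubes are closed. -/
theorem exists_cover (n : ℕ) {l : ℝ} (h0 : 0 < l) (h1 : l < 1 / 2) :
    ∃ C : ℝ, 1 ≤ C ∧ ∀ E : Set (Pt n), E ⊆ closure (boxT n l) → ∀ r R : ℝ, 0 < r → r ≤ R →
      ∀ x : Pt n, ∃ s : Finset (Pt n), E ∩ ball x R ⊆ ⋃ c ∈ s, closedCube c r ∧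
        (s.card : ℝ) ≤ C * (R / r) ^ ((n : ℝ) * sig l) := by
  classical
  set D : ℝ := 2 / (l ^ 2 * (1 / 2 - l)) with hD
  have hg : 0 < 1 / 2 - l := by linarith
  have hD1 : 1 ≤ D := by
    rw [hD, one_le_div (by positivity)]
    nlinarith [pow_le_one₀ (n := 2) h0.le (by linarith : l ≤ 1), pow_pos h0 2]
  have hσ := sig_nonneg h0 h1
  refine ⟨2 ^ n * D ^ ((n : ℝ) * sig l), ?_, ?_⟩
  · exact one_le_mul_of_one_le_of_one_le (one_le_pow₀ (by norm_num))
      (Real.one_le_rpow hD1 (by positivity))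
  intro E hE r R hr hrR x
  have hR : 0 < R := hr.trans_le hrR
  obtain ⟨j, hj, hcov⟩ := cov_T h0 h1 hr hrR
  have hproj : ∀ i : Fin n, Cov1 ((fun z : Pt n => z i) '' (boxT n l ∩ ball x R)) r
      (2 ^ (j + 1)) := by
    intro i
    refine hcov _ (x i + R) ?_ ?_ ?_
    · rintro _ ⟨z, hz, rfl⟩; exact hz.1 i
    · rintro _ ⟨z, hz, rfl⟩
      have h2 := (abs_coord_sub_le z x i).trans_lt hz.2
      have := (abs_lt.1 h2).2
      dsimp only; linarith
    · rintro _ ⟨z, hz, rfl⟩ _ ⟨y, hy, rfl⟩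
      have h2 := abs_lt.1 ((abs_coord_sub_le z x i).trans_lt hz.2)
      have h3 := abs_lt.1 ((abs_coord_sub_le y x i).trans_lt hy.2)
      rw [abs_lt]
      constructor <;> dsimp only <;> linarith
  choose s hs hc using hproj
  refine ⟨(Fintype.piFinset s).image (WithLp.toLp 2), ?_, ?_⟩
  · have hcl : IsClosed (⋃ c ∈ (Fintype.piFinset s).image (WithLp.toLp 2),
        closedCube (n := n) c r) :=
      Set.Finite.isClosed_biUnion (Finset.finite_toSet _) fun c _ => isClosed_closedCube c r
    have hsub : boxT n l ∩ ball x R ⊆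
        ⋃ c ∈ (Fintype.piFinset s).image (WithLp.toLp 2), closedCube (n := n) c r := by
      intro z hz
      have : ∀ i, ∃ c ∈ s i, c ≤ z i ∧ z i ≤ c + r := fun i => hc i _ ⟨z, hz, rfl⟩
      choose c hcs hcz using this
      simp only [Set.mem_iUnion]
      exact ⟨WithLp.toLp 2 c, Finset.mem_image_of_mem _ (Fintype.mem_piFinset.2 hcs), hcz⟩
    intro z hz
    refine closure_minimal hsub hcl ?_
    rw [inter_comm]
    exact isOpen_ball.inter_closure ⟨hz.2, hE hz.1⟩
  · have e1 : ((Fintype.piFinset s).image (WithLp.toLp 2)).card ≤ (2 ^ (j + 1)) ^ n := by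
      refine Finset.card_image_le.trans ?_
      rw [Fintype.card_piFinset]
      refine (Finset.prod_le_prod' fun i _ => hs i).trans ?_
      simp
    have e2 : (2 : ℝ) ^ j ≤ (D * (R / r)) ^ sig l := by
      rw [← rpow_sig h0 h1 j]
      exact Real.rpow_le_rpow (by positivity) hj hσ
    calc ((((Fintype.piFinset s).image (WithLp.toLp 2)).card : ℕ) : ℝ)
        ≤ (((2 ^ (j + 1)) ^ n : ℕ) : ℝ) := by exact_mod_cast e1
      _ = 2 ^ n * (2 ^ j) ^ n := by push_cast; rw [pow_succ, mul_pow]; ring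
      _ ≤ 2 ^ n * ((D * (R / r)) ^ sig l) ^ n := by gcongr
      _ = 2 ^ n * D ^ ((n : ℝ) * sig l) * (R / r) ^ ((n : ℝ) * sig l) := by
        rw [← Real.rpow_natCast ((D * (R / r)) ^ sig l), ← Real.rpow_mul (by positivity),
          mul_comm (sig l), Real.mul_rpow (by positivity) (by positivity), mul_assoc]

/-- The `2 ^ (m n)` centers of generation `m + k` inside `[0, l ^ k]ⁿ` lie in the unit ball and no
two of them share a cube of edge `r ≤ l ^ (m + k)`. -/
theorem card_cover_ge (n : ℕ) {a l : ℝ} (hl : l = (1 - a) / 2) (h0 : 0 < l) (h1 : l < 1 / 2) :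
    ∃ c r₀ : ℝ, 0 < c ∧ 0 < r₀ ∧ r₀ < 1 ∧ ∀ r : ℝ, 0 < r → r < r₀ → ∀ s : Finset (Pt n),
      Ea n a ∩ ball 0 1 ⊆ ⋃ c ∈ s, closedCube c r →
        c * (1 / r) ^ ((n : ℝ) * sig l) ≤ s.card := by
  classical
  obtain ⟨k, hk⟩ := exists_pow_lt_of_lt_one (x := 1 / ((n : ℝ) + 1)) (y := l) (by positivity)
    (by linarith)
  rw [lt_div_iff₀ (by positivity)] at hk
  have hlk : 0 < l ^ k := pow_pos h0 k
  have hσ := sig_nonneg h0 h1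
  refine ⟨(2 ^ ((k + 1) * n))⁻¹, min (l ^ k) (1 / 2), by positivity, by positivity,
    (min_le_right _ _).trans_lt (by norm_num), ?_⟩
  intro r hr hrr s hs
  have hr1 : r < 1 := hrr.trans_le ((min_le_right _ _).trans (by norm_num))
  obtain ⟨M, hM1, hM2⟩ := exists_nat_pow_near_of_lt_one hr hr1.le h0 (by linarith)
  have hkM : k ≤ M := by
    have h2 : l ^ (M + 1) < l ^ k := hM1.trans (hrr.trans_le (min_le_left _ _))
    rw [pow_lt_pow_iff_right_of_lt_one₀ h0 (by linarith)] at h2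
    omega
  obtain ⟨m, rfl⟩ := Nat.exists_eq_add_of_le' hkM
  let pt : (Fin n → Fin m → Bool) → Pt n := fun β =>
    WithLp.toLp 2 fun i => l ^ k * cen l m (β i)
  have hpt : ∀ β, pt β ∈ Ea n a ∩ ball 0 1 := by
    intro β
    constructor
    · refine subset_closure ⟨m + k, fun i => ?_⟩
      obtain ⟨b', hb'⟩ := pow_mul_cen l k m (β i)
      refine ⟨b', ?_⟩
      rw [← hl]
      exact hb'
    · rw [mem_ball_zero_iff, EuclideanSpace.norm_eq, Real.sqrt_lt' one_pos]
      have h3 : ∀ i : Fin n, ‖pt β i‖ ^ 2 ≤ l ^ k := by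
        intro i
        obtain ⟨h4, h5⟩ := Sc_bounds h0 h1 ⟨m, β i, rfl⟩
        have h6 : l ^ k ≤ 1 := pow_le_one₀ h0.le (by linarith)
        change ‖l ^ k * cen l m (β i)‖ ^ 2 ≤ l ^ k
        have h7 : 0 ≤ l ^ k * cen l m (β i) := by positivity
        have h8 : l ^ k * cen l m (β i) ≤ l ^ k := mul_le_of_le_one_right hlk.le h5.le
        rw [Real.norm_of_nonneg h7]
        nlinarith
      calc ∑ i, ‖pt β i‖ ^ 2 ≤ ∑ _i : Fin n, l ^ k := Finset.sum_le_sum fun i _ => h3 i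
        _ = n * l ^ k := by simp
        _ < 1 ^ 2 := by nlinarith
  have hch : ∀ β, ∃ c : s, pt β ∈ closedCube (c : Pt n) r := by
    intro β
    have := hs (hpt β)
    simp only [Set.mem_iUnion] at this
    obtain ⟨c, hcs, hcz⟩ := this
    exact ⟨⟨c, hcs⟩, hcz⟩
  choose f hf using hch
  have hinj : Function.Injective f := by
    intro β β' h
    by_contra hne
    obtain ⟨i, hi⟩ := Function.ne_iff.1 hne
    have h2 := cen_sep h0 h1 m _ _ hi
    have h3 := hf β i
    have h4 := hf β' i
    rw [← h] at h4
    have h5 : |pt β i - pt β' i| ≤ r := by rw [abs_le]; constructor <;> linarith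
    change |l ^ k * cen l m (β i) - l ^ k * cen l m (β' i)| ≤ r at h5
    rw [← mul_sub, abs_mul, abs_of_pos hlk] at h5
    have h6 := mul_lt_mul_of_pos_left h2 hlk
    rw [← pow_add, add_comm] at h6
    linarith
  have hcard := Fintype.card_le_of_injective f hinj
  simp only [Fintype.card_pi, Fintype.card_bool, Finset.prod_const, Finset.card_univ,
    Fintype.card_fin, Fintype.card_coe] at hcard
  have e1 : (1 / r) ≤ l⁻¹ ^ (m + k + 1) := by
    rw [inv_pow, one_div]
    exact inv_anti₀ (pow_pos h0 _) hM1.le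
  have e2 : (1 / r) ^ sig l ≤ 2 ^ (m + k + 1) := by
    rw [← rpow_sig h0 h1]
    exact Real.rpow_le_rpow (by positivity) e1 hσ
  have e3 : (1 / r) ^ ((n : ℝ) * sig l) ≤ (2 ^ (m + k + 1)) ^ n := by
    rw [mul_comm, Real.rpow_mul (by positivity), Real.rpow_natCast]
    gcongr
  rw [inv_mul_le_iff₀ (by positivity)]
  calc (1 / r) ^ ((n : ℝ) * sig l) ≤ (2 ^ (m + k + 1)) ^ n := e3
    _ = 2 ^ ((k + 1) * n) * (2 ^ m) ^ n := by
      rw [← pow_mul, ← pow_mul, ← pow_add]; ring_nf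
    _ ≤ 2 ^ ((k + 1) * n) * s.card := by
      gcongr
      exact_mod_cast hcard

theorem le_Ncov {n : ℕ} {r : ℝ} {E : Set (Pt n)} {v : ℝ}
    (hex : ∃ s : Finset (Pt n), E ⊆ ⋃ c ∈ s, closedCube c r)
    (h : ∀ s : Finset (Pt n), E ⊆ ⋃ c ∈ s, closedCube c r → v ≤ s.card) :
    v ≤ Ncov r E := by
  obtain ⟨s, hs⟩ := hex
  obtain ⟨t, ht, htE⟩ := Nat.sInf_mem (s := {m : ℕ | ∃ s : Finset (Pt n), s.card = m ∧
    E ⊆ ⋃ c ∈ s, closedCube c r}) ⟨_, s, rfl, hs⟩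
  have := h t htE
  rw [ht] at this
  exact this

theorem Ncov_le {n : ℕ} {r : ℝ} {E : Set (Pt n)} (s : Finset (Pt n))
    (hs : E ⊆ ⋃ c ∈ s, closedCube c r) : Ncov r E ≤ s.card :=
  Nat.sInf_le ⟨s, rfl, hs⟩

/-! ### From covering bounds to dimensions -/

theorem tendsto_const_div_log (s v : ℝ) :
    Tendsto (fun r : ℝ => s + v / Real.log (1 / r)) (nhdsWithin 0 (Ioi 0)) (nhds s) := by
  have h1 : Tendsto (fun r : ℝ => Real.log (1 / r)) (nhdsWithin 0 (Ioi 0)) atTop := by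
    simp only [one_div]
    exact Real.tendsto_log_atTop.comp tendsto_inv_nhdsGT_zero
  simpa using (h1.const_div_atTop v).const_add s

theorem tendsto_const_div_log_atTop (s v : ℝ) :
    Tendsto (fun N : ℝ => s + v / Real.log N) atTop (nhds s) := by
  simpa using (Real.tendsto_log_atTop.const_div_atTop v).const_add s

theorem ratio_le_s6 {s C q : ℝ} {K : ℕ} (hs : 0 ≤ s) (hC : 1 ≤ C) (hq : 1 < q)
    (h : (K : ℝ) ≤ C * q ^ s) : Real.log K / Real.log q ≤ s + Real.log C / Real.log q := by
  have hlq : 0 < Real.log q := Real.log_pos hq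
  have hlC : 0 ≤ Real.log C := Real.log_nonneg hC
  rw [div_le_iff₀ hlq, add_mul, div_mul_cancel₀ _ hlq.ne']
  rcases Nat.eq_zero_or_pos K with rfl | hK
  · simp; positivity
  · have h2 := Real.log_le_log (by exact_mod_cast hK) h
    rw [Real.log_mul (by positivity) (Real.rpow_pos_of_pos (by linarith) _).ne',
      Real.log_rpow (by linarith)] at h2
    linarith

theorem le_ratio {s c q v : ℝ} (hc : 0 < c) (hq : 1 < q)
    (h : c * q ^ s ≤ v) : s + Real.log c / Real.log q ≤ Real.log v / Real.log q := by
  have hlq : 0 < Real.log q := Real.log_pos hq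
  have hqs : 0 < q ^ s := Real.rpow_pos_of_pos (by linarith) _
  rw [le_div_iff₀ hlq, add_mul, div_mul_cancel₀ _ hlq.ne']
  have h2 := Real.log_le_log (by positivity) h
  rw [Real.log_mul hc.ne' hqs.ne', Real.log_rpow (by linarith)] at h2
  linarith

/-- Two-sided covering estimates of exponent `s`: an upper bound at all places and scales, and a
matching lower bound for the unit ball. -/
structure Regular {n : ℕ} (E : Set (Pt n)) (s C c r₀ : ℝ) : Prop where
  s_nonneg : 0 ≤ s
  one_le_C : 1 ≤ C
  c_pos : 0 < c
  r₀_pos : 0 < r₀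
  r₀_lt : r₀ < 1
  upper : ∀ r R : ℝ, 0 < r → r ≤ R → ∀ x : Pt n,
    (Ncov r (E ∩ ball x R) : ℝ) ≤ C * (R / r) ^ s
  lower : ∀ r : ℝ, 0 < r → r < r₀ → c * (1 / r) ^ s ≤ Ncov r (E ∩ ball 0 1)

namespace Regular

variable {n : ℕ} {E : Set (Pt n)} {s C c r₀ : ℝ}

theorem ratio_upper (h : Regular E s C c r₀) {N r R : ℝ} (hN : 2 ≤ N) (hr : 0 < r)
    (hR : N * r ≤ R) (x : Pt n) :
    Real.log (Ncov r (E ∩ ball x R)) / Real.log (R / r) ≤ s + Real.log C / Real.log N := by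
  have hq : N ≤ R / r := by rwa [le_div_iff₀ hr]
  have hrR : r ≤ R := by nlinarith
  refine (ratio_le_s6 h.s_nonneg h.one_le_C (by linarith) (h.upper r R hr hrR x)).trans ?_
  have h1 : 0 < Real.log N := Real.log_pos (by linarith)
  have h2 : Real.log N ≤ Real.log (R / r) := Real.log_le_log (by linarith) hq
  have h3 : 0 ≤ Real.log C := Real.log_nonneg h.one_le_C
  gcongr

theorem ratio_lower (h : Regular E s C c r₀) {r : ℝ} (hr : 0 < r) (hr0 : r < r₀) :
    s + Real.log c / Real.log (1 / r) ≤
      Real.log (Ncov r (E ∩ ball 0 1)) / Real.log (1 / r) := by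
  refine le_ratio h.c_pos ?_ (h.lower r hr hr0)
  rw [lt_div_iff₀ hr]
  linarith [h.r₀_lt]

theorem dimGlob_eq (h : Regular E s C c r₀) : dimGlob E = s := by
  refine Tendsto.liminf_eq ?_
  refine tendsto_of_tendsto_of_tendsto_of_le_of_le' tendsto_const_nhds
    (tendsto_const_div_log_atTop s (Real.log C)) ?_ ?_
  · filter_upwards [eventually_ge_atTop 2] with N hN
    refine le_of_tendsto (tendsto_const_div_log s (Real.log c)) ?_
    filter_upwards [Ioo_mem_nhdsGT (lt_min h.r₀_pos (by positivity : 0 < 1 / N))] with r hr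
    refine (h.ratio_lower hr.1 (hr.2.trans_le (min_le_left _ _))).trans (le_csSup ?_ ?_)
    · refine ⟨s + Real.log C / Real.log N, ?_⟩
      rintro d ⟨ρ, hρ, x, R, _, hR, rfl⟩
      exact h.ratio_upper hN hρ hR x
    · have h2 := hr.2.trans_le (min_le_right _ _)
      rw [lt_div_iff₀ (by linarith)] at h2
      exact ⟨r, hr.1, 0, 1, one_pos, by linarith, rfl⟩
  · filter_upwards [eventually_ge_atTop 2] with N hN
    refine csSup_le ⟨_, 1, one_pos, 0, N, by linarith, by linarith, rfl⟩ ?_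
    rintro d ⟨ρ, hρ, x, R, _, hR, rfl⟩
    exact h.ratio_upper hN hρ hR x

theorem dimLoc_eq (h : Regular E s C c r₀) : dimLoc E = s := by
  refine Tendsto.liminf_eq ?_
  -- for each fixed `N ≥ 2` the inner suprema are eventually trapped between these bounds
  have key : ∀ N : ℝ, 2 ≤ N → ∀ᶠ r : ℝ in nhdsWithin 0 (Ioi 0),
      s + Real.log c / Real.log (1 / r) ≤ sSup (locRatios E N r 1) ∧
        sSup (locRatios E N r 1) ≤ s + Real.log C / Real.log N := by
    intro N hN
    filter_upwards [Ioo_mem_nhdsGT (lt_min h.r₀_pos (by positivity : 0 < 1 / N))] with r hr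
    have hmem : Real.log (Ncov r (E ∩ ball 0 1)) / Real.log (1 / r) ∈ locRatios E N r 1 := by
      have h2 := hr.2.trans_le (min_le_right _ _)
      rw [lt_div_iff₀ (by linarith)] at h2
      exact ⟨0, 1, one_pos, by linarith, le_rfl, rfl⟩
    have hub : ∀ d ∈ locRatios E N r 1, d ≤ s + Real.log C / Real.log N := by
      rintro d ⟨x, R, _, hR, _, rfl⟩
      exact h.ratio_upper hN hr.1 hR x
    exact ⟨(h.ratio_lower hr.1 (hr.2.trans_le (min_le_left _ _))).trans
      (le_csSup ⟨_, hub⟩ hmem), csSup_le ⟨_, hmem⟩ hub⟩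
  have hlim := tendsto_const_div_log s (Real.log c)
  refine tendsto_of_tendsto_of_tendsto_of_le_of_le' tendsto_const_nhds
    (tendsto_const_div_log_atTop s (Real.log C)) ?_ ?_
  · filter_upwards [eventually_ge_atTop 2] with N hN
    rw [← hlim.limsup_eq]
    refine limsup_le_limsup ((key N hN).mono fun r hr => hr.1) ?_ ?_
    · exact hlim.isCoboundedUnder_le
    · exact isBoundedUnder_of_eventually_le ((key N hN).mono fun r hr => hr.2)
  · filter_upwards [eventually_ge_atTop 2] with N hN
    refine limsup_le_of_le ?_ ((key N hN).mono fun r hr => hr.2)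
    have hb : IsBoundedUnder (· ≥ ·) (nhdsWithin 0 (Ioi 0))
        (fun r : ℝ => sSup (locRatios E N r 1)) := by
      refine isBoundedUnder_of_eventually_ge (a := s - 1) ?_
      filter_upwards [key N hN, hlim.eventually (lt_mem_nhds (by linarith : s - 1 < s))]
        with r hr hr2
      linarith [hr.1]
    exact hb.isCoboundedUnder_le

/-- For bounded sets the same estimates determine the Minkowski dimension. -/
theorem dimM_eq (h : Regular E s C c r₀) {ρ : ℝ} (hρ : 1 ≤ ρ) (hE : E ⊆ ball 0 ρ)
    (hmono : ∀ r : ℝ, 0 < r → Ncov r (E ∩ ball 0 1) ≤ Ncov r E) : dimM E = s := by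
  have hρs : 0 < ρ ^ s := Real.rpow_pos_of_pos (by linarith) _
  refine Tendsto.limsup_eq ?_
  refine tendsto_of_tendsto_of_tendsto_of_le_of_le' (tendsto_const_div_log s (Real.log c))
    (tendsto_const_div_log s (Real.log (C * ρ ^ s))) ?_ ?_
  · filter_upwards [Ioo_mem_nhdsGT h.r₀_pos] with r hr
    refine le_ratio h.c_pos ?_ ((h.lower r hr.1 hr.2).trans (by exact_mod_cast hmono r hr.1))
    rw [lt_div_iff₀ hr.1]
    linarith [h.r₀_lt, hr.2]
  · filter_upwards [Ioo_mem_nhdsGT h.r₀_pos] with r hr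
    have hr1 : r < 1 := hr.2.trans h.r₀_lt
    refine ratio_le_s6 h.s_nonneg (one_le_mul_of_one_le_of_one_le h.one_le_C
      (Real.one_le_rpow hρ h.s_nonneg)) ?_ ?_
    · rw [lt_div_iff₀ hr.1]; linarith
    · have h2 := h.upper r ρ hr.1 (by linarith) 0
      rw [inter_eq_left.2 hE] at h2
      refine h2.trans (le_of_eq ?_)
      rw [mul_assoc, ← Real.mul_rpow (by linarith) (by have := hr.1; positivity), mul_one_div]

end Regular

theorem cantorCenters_mem {n : ℕ} {a l : ℝ} (hl : l = (1 - a) / 2) {z : Pt n}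
    (hz : z ∈ cantorCenters n a) (i : Fin n) : z i ∈ Sc l := by
  obtain ⟨m, hm⟩ := hz
  obtain ⟨b, hb⟩ := hm i
  rw [← hl] at hb
  exact ⟨m, b, hb⟩

theorem Ea_subset_calEa (n : ℕ) (a : ℝ) : Ea n a ⊆ calEa n a :=
  fun x hx => ⟨0, x, hx, by simp⟩

theorem calEa_subset {n : ℕ} {a l : ℝ} (hl : l = (1 - a) / 2) :
    calEa n a ⊆ closure (boxT n l) := by
  rintro _ ⟨k, x, hx, rfl⟩
  have hL : 2 / (1 - a) = l⁻¹ := by rw [hl, inv_div]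
  rw [hL]
  refine map_mem_closure (f := fun x : Pt n => (l⁻¹ ^ k : ℝ) • x) (by fun_prop) hx ?_
  intro z hz i
  exact ⟨k, z i, cantorCenters_mem hl hz i, by simp⟩

theorem Ea_subset_ball {n : ℕ} {a l : ℝ} (hl : l = (1 - a) / 2) (h0 : 0 < l) (h1 : l < 1 / 2) :
    Ea n a ⊆ ball 0 ((n : ℝ) + 1) := by
  have : cantorCenters n a ⊆ closedBall 0 (n : ℝ) := by
    intro z hz
    rw [mem_closedBall_zero_iff, EuclideanSpace.norm_eq]
    refine Real.sqrt_le_iff.2 ⟨by positivity, ?_⟩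
    have h2 : ∀ i : Fin n, ‖z i‖ ^ 2 ≤ 1 := by
      intro i
      have := Sc_bounds h0 h1 (cantorCenters_mem hl hz i)
      rw [Real.norm_of_nonneg this.1.le]
      nlinarith
    calc ∑ i, ‖z i‖ ^ 2 ≤ ∑ _i : Fin n, (1 : ℝ) := Finset.sum_le_sum fun i _ => h2 i
      _ = n := by simp
      _ ≤ (n : ℝ) ^ 2 := by
        rcases Nat.eq_zero_or_pos n with rfl | hn
        · simp
        · have : (1 : ℝ) ≤ n := by exact_mod_cast hn
          nlinarith
  exact (closure_minimal this isClosed_closedBall).trans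
    (closedBall_subset_ball (by linarith))

/-- `dim_M E_a = dim_L E_a = dim_L ℰ_a = dim_LG E_a = dim_LG ℰ_a
= n log 2 / log (2/(1-a))`. -/
theorem cantor_dims (n : ℕ) (hn : 1 ≤ n) (a : ℝ) (ha : a ∈ Ioo (0:ℝ) 1) :
    dimM (Ea n a) = (n : ℝ) * Real.log 2 / Real.log (2 / (1 - a)) ∧
    dimLoc (Ea n a) = (n : ℝ) * Real.log 2 / Real.log (2 / (1 - a)) ∧
    dimLoc (calEa n a) = (n : ℝ) * Real.log 2 / Real.log (2 / (1 - a)) ∧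
    dimGlob (Ea n a) = (n : ℝ) * Real.log 2 / Real.log (2 / (1 - a)) ∧
    dimGlob (calEa n a) = (n : ℝ) * Real.log 2 / Real.log (2 / (1 - a)) := by
  obtain ⟨ha0, ha1⟩ := ha
  obtain ⟨l, hl⟩ : ∃ l : ℝ, l = (1 - a) / 2 := ⟨_, rfl⟩
  have h0 : 0 < l := by rw [hl]; linarith
  have h1 : l < 1 / 2 := by rw [hl]; linarith
  have hs : (n : ℝ) * Real.log 2 / Real.log (2 / (1 - a)) = (n : ℝ) * sig l := by
    rw [sig, hl, inv_div, mul_div_assoc]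
  rw [hs]
  obtain ⟨C, hC, hcov⟩ := exists_cover n h0 h1
  obtain ⟨c, r₀, hc, hr0, hr1, hlow⟩ := card_cover_ge n hl h0 h1
  have hreg : ∀ E : Set (Pt n), Ea n a ⊆ E → E ⊆ calEa n a →
      Regular E ((n : ℝ) * sig l) C c r₀ := by
    intro E hE1 hE2
    have hE3 := hE2.trans (calEa_subset hl)
    refine ⟨mul_nonneg (Nat.cast_nonneg n) (sig_nonneg h0 h1), hC, hc, hr0, hr1, ?_, ?_⟩
    · intro r R hr hrR x
      obtain ⟨s, hsE, hsc⟩ := hcov E hE3 r R hr hrR x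
      exact le_trans (by exact_mod_cast Ncov_le s hsE) hsc
    · intro r hr hrr
      obtain ⟨s, hsE, -⟩ := hcov E hE3 r 1 hr (by linarith) 0
      refine le_Ncov ⟨s, hsE⟩ fun t ht => hlow r hr hrr t ?_
      exact (inter_subset_inter_left _ hE1).trans ht
  have hA := hreg (Ea n a) Subset.rfl (Ea_subset_calEa n a)
  have hB := hreg (calEa n a) (Ea_subset_calEa n a) Subset.rfl
  refine ⟨?_, hA.dimLoc_eq, hB.dimLoc_eq, hA.dimGlob_eq, hB.dimGlob_eq⟩
  refine hA.dimM_eq (ρ := (n : ℝ) + 1) (by linarith [Nat.cast_nonneg (α := ℝ) n])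
    (Ea_subset_ball hl h0 h1) fun r hr => ?_
  -- monotonicity of `Ncov` needs a finite cover of the larger set to exist
  obtain ⟨s, hsE, -⟩ := hcov (Ea n a) ((Ea_subset_calEa n a).trans (calEa_subset hl)) r
    (max r ((n : ℝ) + 1)) hr (le_max_left _ _) 0
  have hb : Ea n a ⊆ ball 0 (max r ((n : ℝ) + 1)) :=
    (Ea_subset_ball hl h0 h1).trans (ball_subset_ball (le_max_right _ _))
  rw [inter_eq_left.2 hb] at hsE
  have : (Ncov r (Ea n a ∩ ball 0 1) : ℝ) ≤ Ncov r (Ea n a) :=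
    le_Ncov ⟨s, hsE⟩ fun t ht => by exact_mod_cast Ncov_le t (inter_subset_left.trans ht)
  exact_mod_cast this

end
end

section
/- Let n ≥ 1, α ∈ (0,1) and q ∈ (0,2]. There exists a constant C > 0, depending only on n, α and q, such that for every measurable function u : ℝⁿ → ℝ and every x₀ ∈ ℝⁿ and r > 0 one has C⁻¹ Φ_α(u, B(x₀, r/16)) ≤ Ψ_{α,q}(u, B(x₀, r)) ≤ C Φ_α(u, B(x₀, 16r)). -/
/-!
Both inequalities compare a double integral with a sum over dyadic radii `2^{-k} r`.

Upper bound for `Psi` (`upper_bound`). By Jensen's inequality (`q ≤ 2`) the exponent `q` may be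
replaced by `2`, and the infimum over `c` is at most the average over the choices `c = u w` with `w`
in the small ball. By Tonelli's theorem the centre `x` integrates out, so that the `k`-th term is
bounded by the integral of `|u z - u w|²` over `|z - w| < 2^{1-k} r`, divided by the volume of the
ball of radius `2^{-k} r` (`lintegral_iInf_osc_le`). The resulting kernels form a geometric series
dominated by `|z - w|^{-(n+2α)}` (`kernel_sum_le`).

Lower bound for `Psi` (`lower_bound`). Put `t = 2^α` and choose almost optimal constants `c_k` on
the balls `B(x, 2^{-k} r)`. Consecutive constants are close to each other (`dist_le_osc`), and for
almost every `x` Lebesgue differentiation, applied to truncations since `u` need not be locally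
integrable, shows that they lead to `u x`. A weighted Cauchy–Schwarz inequality along the chain
gives `t^k |u x - c_k|² ≤ C ∑_{i ≥ k} t^i osc_i(x)` (`exists_approx`), where `osc_i(x)` is the
oscillation at scale `i`. Comparing the constants at two points with `|x - y| ≤ 2^{-k} r / 2` bounds
`|u x - u y|²` by the sum of the two tails (`diff_le_tail`). It remains to integrate over the
dyadic annuli `|x - y| ≈ 2^{-k} r` (`near_diag`) and to exchange the sums over `k` and `i`, where
`∑_{k ≤ i} t^k ≤ C t^i` produces the weight `t^{2i} = 2^{2iα}` of `Psi` (`sum_tail_le`).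

For measurability in `x` the constants are taken rational, which costs only a factor
(`iInf_rat_le`).
-/

open MeasureTheory Metric Filter Set ENNReal NNReal

noncomputable section

/-! ### Mean oscillations and their quasi-triangle inequalities -/

/-- The `2/q`-th power of the mean of `|u - c|^q` over `B(x, ρ)`, i.e. the quantity under the
infimum in `Psi`. -/
def osc {n : ℕ} (q : ℝ) (u : Pt n → ℝ) (x : Pt n) (ρ : ℝ) (c : ℝ) : ℝ≥0∞ :=
  ((volume (ball x ρ))⁻¹ * ∫⁻ z in ball x ρ, ENNReal.ofReal (|u z - c| ^ q)) ^ (2 / q)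

/-- The dyadic radius `2^{-k} r`. -/
def rad (r : ℝ) (k : ℕ) : ℝ := (2:ℝ) ^ (-(k:ℝ)) * r

lemma rad_pos {r : ℝ} (hr : 0 < r) (k : ℕ) : 0 < rad r k := by
  unfold rad; positivity

lemma rad_eq (r : ℝ) (k : ℕ) : rad r k = r / 2 ^ k := by
  unfold rad
  rw [Real.rpow_neg (by norm_num), Real.rpow_natCast]
  field_simp

lemma rad_succ (r : ℝ) (k : ℕ) : rad r (k + 1) = rad r k / 2 := by
  rw [rad_eq, rad_eq, pow_succ]; field_simp

lemma rad_le {r : ℝ} (hr : 0 < r) (k : ℕ) : rad r k ≤ r := by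
  rw [rad_eq]
  exact div_le_self hr.le (one_le_pow₀ (by norm_num))

lemma vol_ball {n : ℕ} (x : Pt n) {ρ : ℝ} (hρ : 0 < ρ) :
    volume (ball x ρ) = ENNReal.ofReal (ρ ^ n) * volume (ball (0 : Pt n) 1) := by
  rw [Measure.addHaar_ball_of_pos _ _ hρ]; simp

lemma vol_ne_zero {n : ℕ} (x : Pt n) {ρ : ℝ} (hρ : 0 < ρ) : volume (ball x ρ) ≠ 0 :=
  (measure_ball_pos _ _ hρ).ne'

lemma vol_ne_top {n : ℕ} (x : Pt n) (ρ : ℝ) : volume (ball x ρ) ≠ ⊤ :=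
  measure_ball_lt_top.ne

lemma add_rpow_le' (a b : ℝ≥0∞) {p : ℝ} (hp : 0 ≤ p) :
    (a + b) ^ p ≤ 2 ^ p * (a ^ p + b ^ p) := by
  wlog h : a ≤ b generalizing a b
  · rw [add_comm a b, add_comm (a ^ p)]
    exact this b a (le_of_not_ge h)
  calc (a + b) ^ p ≤ (2 * b) ^ p := by
        rw [two_mul]; exact ENNReal.rpow_le_rpow (by gcongr) hp
    _ = 2 ^ p * b ^ p := ENNReal.mul_rpow_of_nonneg _ _ hp
    _ ≤ _ := by gcongr; exact le_add_self

lemma ofReal_abs_rpow (a : ℝ) {q : ℝ} (hq : 0 < q) :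
    ENNReal.ofReal (|a| ^ q) = ENNReal.ofReal |a| ^ q :=
  (ENNReal.ofReal_rpow_of_nonneg (abs_nonneg a) hq.le).symm

lemma ofReal_abs_le (a b c : ℝ) :
    ENNReal.ofReal |a - c| ≤ ENNReal.ofReal |b - a| + ENNReal.ofReal |b - c| := by
  rw [← ENNReal.ofReal_add (abs_nonneg _) (abs_nonneg _), abs_sub_comm b a]
  exact ENNReal.ofReal_le_ofReal (abs_sub_le a b c)

lemma quasi_triangle {q : ℝ} (hq : 0 < q) (a b c : ℝ) :
    ENNReal.ofReal (|a - c| ^ q) ≤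
      2 ^ q * (ENNReal.ofReal (|b - a| ^ q) + ENNReal.ofReal (|b - c| ^ q)) := by
  simp only [ofReal_abs_rpow _ hq]
  exact (ENNReal.rpow_le_rpow (ofReal_abs_le a b c) hq.le).trans (add_rpow_le' _ _ hq.le)

/-- The constant in the quasi-triangle inequalities for `osc`. The factor `2 ^ n` pays for passing
from a ball to a concentric ball of half the radius. -/
def KK (n : ℕ) (q : ℝ) : ℝ≥0∞ := (2 ^ q * 2 ^ n) ^ (2 / q) * 2 ^ (2 / q)

lemma KK_ne_top (n : ℕ) {q : ℝ} (hq : 0 < q) : KK n q ≠ ⊤ := by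
  unfold KK
  have h2 : (0:ℝ) ≤ 2 / q := by positivity
  refine ENNReal.mul_ne_top (ENNReal.rpow_ne_top_of_nonneg h2 (ENNReal.mul_ne_top ?_ ?_)) ?_
  · exact ENNReal.rpow_ne_top_of_nonneg hq.le (by simp)
  · exact ENNReal.pow_ne_top (by simp)
  · exact ENNReal.rpow_ne_top_of_nonneg h2 (by simp)

lemma one_le_KK (n : ℕ) {q : ℝ} (hq : 0 < q) : 1 ≤ KK n q := by
  unfold KK
  have h2 : (0:ℝ) < 2 / q := by positivity
  have h1 : (1:ℝ≥0∞) ≤ 2 ^ q := ENNReal.one_le_rpow (by norm_num) hq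
  have h3 : (1:ℝ≥0∞) ≤ 2 ^ n := one_le_pow₀ (by norm_num)
  have h4 : (1:ℝ≥0∞) ≤ 2 ^ (2 / q) := ENNReal.one_le_rpow (by norm_num) h2
  exact one_le_mul (ENNReal.one_le_rpow (one_le_mul h1 h3) h2) h4

lemma meas_abs {n : ℕ} {u : Pt n → ℝ} (hu : Measurable u) (q c : ℝ) :
    Measurable fun z => ENNReal.ofReal (|u z - c| ^ q) := by
  have : Measurable fun z => |u z - c| := (hu.sub_const c).abs
  exact (this.pow_const q).ennreal_ofReal

lemma rpow_q_two {q : ℝ} (hq : 0 < q) (a : ℝ) :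
    ENNReal.ofReal (|a| ^ q) ^ (2 / q) = ENNReal.ofReal |a| ^ 2 := by
  rw [ofReal_abs_rpow _ hq, ← ENNReal.rpow_mul, mul_div_cancel₀ _ hq.ne']
  exact ENNReal.rpow_natCast _ 2

/-- Two constants that approximate `u` on two overlapping balls are close to each other, as the
overlap contains a ball of half the radius (or of the same radius). -/
lemma dist_le_osc {n : ℕ} {q : ℝ} (hq : 0 < q) {u : Pt n → ℝ} (hu : Measurable u)
    {x y w : Pt n} {ρ₁ ρ₂ ρ : ℝ} (hρ : 0 < ρ) (h1 : ρ₁ ≤ 2 * ρ) (h2 : ρ₂ ≤ 2 * ρ)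
    (s1 : ball w ρ ⊆ ball x ρ₁) (s2 : ball w ρ ⊆ ball y ρ₂) (c c' : ℝ) :
    ENNReal.ofReal |c - c'| ^ 2 ≤ KK n q * (osc q u x ρ₁ c + osc q u y ρ₂ c') := by
  have h0 : (0:ℝ) ≤ 2 / q := by positivity
  have key : ∀ (x : Pt n) (ρ₁ : ℝ), ρ₁ ≤ 2 * ρ → ball w ρ ⊆ ball x ρ₁ → ∀ c : ℝ,
      (volume (ball w ρ))⁻¹ * ∫⁻ z in ball w ρ, ENNReal.ofReal (|u z - c| ^ q) ≤
      2 ^ n * ((volume (ball x ρ₁))⁻¹ * ∫⁻ z in ball x ρ₁, ENNReal.ofReal (|u z - c| ^ q)) := by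
    intro x ρ₁ h1 s1 c
    have hv : volume (ball x ρ₁) ≤ 2 ^ n * volume (ball w ρ) := by
      calc volume (ball x ρ₁) ≤ volume (ball x (2 * ρ)) := measure_mono (ball_subset_ball h1)
        _ = _ := by
          rw [vol_ball _ (by positivity), vol_ball w hρ, mul_pow,
            ENNReal.ofReal_mul (by positivity), mul_assoc]
          simp
    have hv' : (volume (ball w ρ))⁻¹ ≤ 2 ^ n * (volume (ball x ρ₁))⁻¹ := by
      rw [← div_eq_mul_inv, ENNReal.inv_le_iff_inv_le, ENNReal.inv_div (by simp) (by simp)]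
      exact ENNReal.div_le_of_le_mul' hv
    rw [← mul_assoc]
    exact mul_le_mul' hv' (lintegral_mono_set s1)
  have e : ENNReal.ofReal (|c - c'| ^ q) ≤ 2 ^ q * 2 ^ n *
      ((volume (ball x ρ₁))⁻¹ * (∫⁻ z in ball x ρ₁, ENNReal.ofReal (|u z - c| ^ q)) +
      (volume (ball y ρ₂))⁻¹ * ∫⁻ z in ball y ρ₂, ENNReal.ofReal (|u z - c'| ^ q)) := by
    calc ENNReal.ofReal (|c - c'| ^ q)
        = (volume (ball w ρ))⁻¹ * ∫⁻ z in ball w ρ, ENNReal.ofReal (|c - c'| ^ q) := by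
          rw [setLIntegral_const, mul_comm, mul_assoc,
            ENNReal.mul_inv_cancel (vol_ne_zero w hρ) (vol_ne_top w ρ), mul_one]
      _ ≤ (volume (ball w ρ))⁻¹ * ∫⁻ z in ball w ρ,
            2 ^ q * (ENNReal.ofReal (|u z - c| ^ q) + ENNReal.ofReal (|u z - c'| ^ q)) := by
          gcongr with z
          exact quasi_triangle hq c (u z) c'
      _ = 2 ^ q * ((volume (ball w ρ))⁻¹ * (∫⁻ z in ball w ρ, ENNReal.ofReal (|u z - c| ^ q)) +
          (volume (ball w ρ))⁻¹ * ∫⁻ z in ball w ρ, ENNReal.ofReal (|u z - c'| ^ q)) := by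
          rw [lintegral_const_mul' _ _ (ENNReal.rpow_ne_top_of_nonneg hq.le (by simp)),
            lintegral_add_left (meas_abs hu q c)]
          ring
      _ ≤ 2 ^ q * (2 ^ n * _ + 2 ^ n * _) :=
          mul_le_mul_right (add_le_add (key x ρ₁ h1 s1 c) (key y ρ₂ h2 s2 c')) _
      _ = _ := by ring
  rw [← rpow_q_two hq]
  refine (ENNReal.rpow_le_rpow e h0).trans ?_
  rw [ENNReal.mul_rpow_of_nonneg _ _ h0, KK, mul_assoc]
  gcongr
  exact add_rpow_le' _ _ h0

/-- Quasi-triangle inequality for `osc` in the constant. -/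
lemma osc_le_osc_add {n : ℕ} {q : ℝ} (hq : 0 < q) {u : Pt n → ℝ} (hu : Measurable u)
    (x : Pt n) {ρ : ℝ} (hρ : 0 < ρ) (c c' : ℝ) :
    osc q u x ρ c ≤ KK n q * (osc q u x ρ c' + ENNReal.ofReal |c - c'| ^ 2) := by
  have h0 : (0:ℝ) ≤ 2 / q := by positivity
  have e : (volume (ball x ρ))⁻¹ * ∫⁻ z in ball x ρ, ENNReal.ofReal (|u z - c| ^ q) ≤
      2 ^ q * 2 ^ n * ((volume (ball x ρ))⁻¹ * (∫⁻ z in ball x ρ, ENNReal.ofReal (|u z - c'| ^ q))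
        + ENNReal.ofReal (|c - c'| ^ q)) := by
    calc (volume (ball x ρ))⁻¹ * ∫⁻ z in ball x ρ, ENNReal.ofReal (|u z - c| ^ q)
        ≤ (volume (ball x ρ))⁻¹ * ∫⁻ z in ball x ρ,
            2 ^ q * (ENNReal.ofReal (|u z - c'| ^ q) + ENNReal.ofReal (|c - c'| ^ q)) := by
          gcongr with z
          have := quasi_triangle hq (u z) c' c
          rwa [abs_sub_comm c' (u z), abs_sub_comm c' c] at this
      _ = 2 ^ q * ((volume (ball x ρ))⁻¹ * (∫⁻ z in ball x ρ, ENNReal.ofReal (|u z - c'| ^ q)) +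
          ((volume (ball x ρ))⁻¹ * volume (ball x ρ)) * ENNReal.ofReal (|c - c'| ^ q)) := by
          rw [lintegral_const_mul' _ _ (ENNReal.rpow_ne_top_of_nonneg hq.le (by simp)),
            lintegral_add_left (meas_abs hu q c'), setLIntegral_const]
          ring
      _ ≤ _ := by
          rw [ENNReal.inv_mul_cancel (vol_ne_zero x hρ) (vol_ne_top x ρ), one_mul]
          gcongr
          exact le_mul_of_one_le_right' (one_le_pow₀ (by norm_num))
  unfold osc
  refine (ENNReal.rpow_le_rpow e h0).trans ?_
  rw [ENNReal.mul_rpow_of_nonneg _ _ h0, KK, mul_assoc, ← rpow_q_two hq]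
  gcongr
  exact add_rpow_le' _ _ h0

/-- Restricting the infimum to rational constants costs at most a factor. Rational constants keep
the infimum measurable in the centre of the ball. -/
lemma iInf_rat_le {n : ℕ} {q : ℝ} (hq : 0 < q) {u : Pt n → ℝ} (hu : Measurable u)
    (x : Pt n) {ρ : ℝ} (hρ : 0 < ρ) :
    ⨅ c : ℚ, osc q u x ρ c ≤ KK n q * ⨅ c : ℝ, osc q u x ρ c := by
  have hK := KK_ne_top n hq
  have hK0 : KK n q ≠ 0 := (lt_of_lt_of_le one_pos (one_le_KK n hq)).ne'
  rw [ENNReal.mul_iInf_of_ne hK0 hK]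
  refine le_iInf fun c => ?_
  have ht : Tendsto (fun a : ℝ => KK n q * (osc q u x ρ c + ENNReal.ofReal |a - c| ^ 2))
      (nhds c) (nhds (KK n q * (osc q u x ρ c + ENNReal.ofReal |c - c| ^ 2))) := by
    refine ENNReal.Tendsto.const_mul ?_ (Or.inr hK)
    refine Tendsto.add tendsto_const_nhds ?_
    have : Continuous fun a : ℝ => ENNReal.ofReal |a - c| ^ 2 :=
      (ENNReal.continuous_pow 2).comp (ENNReal.continuous_ofReal.comp (by fun_prop))
    exact this.tendsto c
  have hc : c ∈ closure (range ((↑) : ℚ → ℝ)) := Rat.denseRange_cast c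
  have hne : (nhdsWithin c (range ((↑) : ℚ → ℝ))).NeBot := mem_closure_iff_nhdsWithin_neBot.1 hc
  have ht' := ht.mono_left (nhdsWithin_le_nhds (s := range ((↑) : ℚ → ℝ)))
  have := ge_of_tendsto ht' (b := ⨅ c : ℚ, osc q u x ρ c) (by
    filter_upwards [self_mem_nhdsWithin] with a ha
    obtain ⟨b, rfl⟩ := ha
    exact (iInf_le _ b).trans (osc_le_osc_add hq hu x hρ _ _))
  simpa using this

lemma measurable_ball_lintegral {n : ℕ} {f : Pt n → ℝ≥0∞} (hf : Measurable f) (ρ : ℝ) :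
    Measurable fun x => ∫⁻ z in ball x ρ, f z := by
  have : ∀ x : Pt n, ∫⁻ z in ball x ρ, f z =
      ∫⁻ z, ({p : Pt n × Pt n | dist p.2 p.1 < ρ}.indicator (fun p => f p.2)) (x, z) := by
    intro x
    rw [← lintegral_indicator measurableSet_ball]
    rfl
  simp_rw [this]
  apply Measurable.lintegral_prod_right'
  refine (hf.comp measurable_snd).indicator ?_
  exact measurableSet_lt (measurable_snd.dist measurable_fst) measurable_const

lemma measurable_osc {n : ℕ} {q : ℝ} {u : Pt n → ℝ} (hu : Measurable u) (ρ c : ℝ) :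
    Measurable fun x => osc q u x ρ c := by
  unfold osc
  simp_rw [Measure.addHaar_ball_center volume]
  exact ((measurable_ball_lintegral (meas_abs hu q c) ρ).const_mul _).pow_const _

/-! ### Lebesgue differentiation and geometric sums -/

lemma tendsto_rad {r : ℝ} (hr : 0 < r) : Tendsto (rad r) atTop (nhdsWithin 0 (Ioi 0)) := by
  refine tendsto_nhdsWithin_iff.2 ⟨?_, Eventually.of_forall fun k => rad_pos hr k⟩
  have h : rad r = fun k => r * (1 / 2 : ℝ) ^ k := by
    funext k
    rw [rad_eq]; simp [div_eq_mul_inv]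
  rw [h]
  have := (tendsto_pow_atTop_nhds_zero_of_lt_one (r := (1 / 2 : ℝ)) (by norm_num)
    (by norm_num)).const_mul r
  simpa using this

/-- One-sided Lebesgue differentiation without any integrability: it follows by applying the
differentiation theorem to the truncations of `f`. -/
lemma ae_le_of_means_le {n : ℕ} {f : Pt n → ℝ≥0∞} (hf : Measurable f) (hfin : ∀ x, f x ≠ ⊤)
    {r : ℝ} (hr : 0 < r) :
    ∀ᵐ x : Pt n, ∀ (k : ℕ) (A : ℝ≥0∞),
      (∀ j ≥ k, (volume (ball x (rad r j)))⁻¹ * ∫⁻ z in ball x (rad r j), f z ≤ A) → f x ≤ A := by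
  let g : ℕ → Pt n → ℝ≥0∞ := fun M => (ball (0 : Pt n) M).indicator fun z => min (f z) M
  have hg : ∀ M, Measurable (g M) := fun M =>
    (hf.min measurable_const).indicator measurableSet_ball
  have hgi : ∀ M, ∫⁻ z, g M z ≠ ⊤ := by
    intro M
    have : ∫⁻ z, g M z ≤ ∫⁻ z in ball (0 : Pt n) M, (M : ℝ≥0∞) := by
      rw [← lintegral_indicator measurableSet_ball]
      refine lintegral_mono fun z => ?_
      exact indicator_le_indicator (min_le_right _ _)
    refine ne_top_of_le_ne_top ?_ this
    rw [setLIntegral_const]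
    exact ENNReal.mul_ne_top (by simp) (vol_ne_top _ _)
  have hae : ∀ᵐ x : Pt n, ∀ M : ℕ, Tendsto (fun a => (∫⁻ y in a, g M y) / volume a)
      ((Besicovitch.vitaliFamily volume).filterAt x) (nhds (g M x)) :=
    ae_all_iff.2 fun M =>
      (Besicovitch.vitaliFamily volume).ae_tendsto_lintegral_div (hg M).aemeasurable (hgi M)
  filter_upwards [hae] with x hx k A hA
  obtain ⟨M₁, hM₁⟩ := exists_nat_gt (dist x 0)
  obtain ⟨M₂, hM₂⟩ := ENNReal.exists_nat_gt (hfin x)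
  have hgx : g (max M₁ M₂) x = f x := by
    have hb : x ∈ ball (0 : Pt n) ((max M₁ M₂ : ℕ) : ℝ) := by
      rw [mem_ball]
      exact hM₁.trans_le (by exact_mod_cast le_max_left _ _)
    simp only [g, indicator_of_mem hb]
    refine min_eq_left (hM₂.le.trans ?_)
    exact_mod_cast le_max_right _ _
  have ht := (hx (max M₁ M₂)).comp ((Besicovitch.tendsto_filterAt volume x).comp (tendsto_rad hr))
  rw [hgx] at ht
  refine le_of_tendsto ht ?_
  filter_upwards [eventually_ge_atTop k] with j hj
  refine le_trans ?_ (hA j hj)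
  simp only [Function.comp]
  have hae : ball x (rad r j) =ᵐ[volume] closedBall x (rad r j) := by
    refine ae_eq_of_subset_of_measure_ge ball_subset_closedBall ?_
      measurableSet_ball.nullMeasurableSet measure_closedBall_lt_top.ne
    rw [Measure.addHaar_closedBall _ _ (rad_pos hr j).le,
      Measure.addHaar_ball_of_pos _ _ (rad_pos hr j)]
  rw [← setLIntegral_congr hae, ← measure_congr hae, ENNReal.div_eq_inv_mul]
  gcongr with z
  exact (indicator_le_self _ _ _).trans (min_le_left _ _)

lemma ae_le_of_osc_le {n : ℕ} {q : ℝ} (hq : 0 < q) {u : Pt n → ℝ} (hu : Measurable u)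
    {r : ℝ} (hr : 0 < r) :
    ∀ᵐ x : Pt n, ∀ (c : ℚ) (k : ℕ) (A : ℝ≥0∞), (∀ j ≥ k, osc q u x (rad r j) c ≤ A) →
      ENNReal.ofReal |u x - c| ^ 2 ≤ A := by
  have h2 : (0:ℝ) < 2 / q := by positivity
  have := ae_all_iff.2 fun c : ℚ =>
    ae_le_of_means_le (meas_abs hu q c) (fun x => ENNReal.ofReal_ne_top) hr
  filter_upwards [this] with x hx c k A hA
  have h := hx c k (A ^ (2 / q)⁻¹) fun j hj => (ENNReal.le_rpow_inv_iff h2).2 (hA j hj)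
  rw [← rpow_q_two hq]
  exact (ENNReal.le_rpow_inv_iff h2).1 h

/-- A geometric sum is dominated by its largest term. -/
lemma geom_sum_le {b : ℝ} (hb : 1 < b) (m : ℕ) :
    ∑ k ∈ Finset.range (m + 1), b ^ k ≤ b / (b - 1) * b ^ m := by
  have h : 0 < b - 1 := by linarith
  rw [geom_sum_eq hb.ne', div_mul_eq_mul_div, div_le_div_iff_of_pos_right h, pow_succ]
  linarith

/-- The terms not exceeding `X` of the geometric sequence `b ^ k` have sum at most a constant
times `X`. -/
lemma tsum_geom_le {b X : ℝ} (hb : 1 < b) (P : ℕ → Prop) [DecidablePred P]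
    (hP : ∀ k, P k → b ^ k ≤ X) :
    ∑' k, (if P k then ENNReal.ofReal (b ^ k) else 0) ≤ ENNReal.ofReal (b / (b - 1) * X) := by
  have h : 0 < b - 1 := by linarith
  have hb0 : 0 < b := by linarith
  refine ENNReal.tsum_le_of_sum_range_le fun m => ?_
  induction m with
  | zero => simp
  | succ m ih =>
    by_cases hm : P m
    · calc ∑ k ∈ Finset.range (m + 1), (if P k then ENNReal.ofReal (b ^ k) else 0)
          ≤ ∑ k ∈ Finset.range (m + 1), ENNReal.ofReal (b ^ k) := by
            refine Finset.sum_le_sum fun k _ => ?_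
            split_ifs <;> simp
        _ = ENNReal.ofReal (∑ k ∈ Finset.range (m + 1), b ^ k) :=
            (ENNReal.ofReal_sum_of_nonneg fun k _ => by positivity).symm
        _ ≤ _ := by
            refine ENNReal.ofReal_le_ofReal ((geom_sum_le hb m).trans ?_)
            have := hP m hm
            gcongr
    · rw [Finset.sum_range_succ, if_neg hm, add_zero]
      exact ih

lemma sum_Ico_inv_le {t : ℝ} (ht : 1 < t) (k j : ℕ) :
    ∑ i ∈ Finset.Ico k j, (t ^ i)⁻¹ ≤ t / (t - 1) * (t ^ k)⁻¹ := by
  have h : 0 < t - 1 := by linarith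
  have h0 : 0 < t := by linarith
  have : ∑ i ∈ Finset.Ico k j, (t ^ i)⁻¹ ≤
      t / (t - 1) * (t ^ k)⁻¹ - t / (t - 1) * (t ^ (max j k))⁻¹ := by
    induction j with
    | zero => simp
    | succ j ih =>
      by_cases hkj : k ≤ j
      · rw [Finset.sum_Ico_succ_top hkj]
        rw [max_eq_left hkj] at ih
        rw [max_eq_left (by omega)]
        have : t / (t - 1) * (t ^ (j + 1))⁻¹ = t / (t - 1) * (t ^ j)⁻¹ - (t ^ j)⁻¹ := by
          rw [pow_succ]; field_simp; ring
        linarith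
      · rw [Finset.Ico_eq_empty (by omega), max_eq_right (by omega)]
        simp
  refine this.trans ?_
  have : 0 ≤ t / (t - 1) * (t ^ (max j k))⁻¹ := by positivity
  linarith

/-- Weighted Cauchy–Schwarz along a chain of real numbers. -/
lemma chain_le {t : ℝ} (ht : 1 < t) (c : ℕ → ℝ) {k j : ℕ} (hkj : k ≤ j) :
    ENNReal.ofReal (t ^ k) * ENNReal.ofReal |c k - c j| ^ 2 ≤ ENNReal.ofReal (t / (t - 1)) *
      ∑ i ∈ Finset.Ico k j, ENNReal.ofReal (t ^ i) * ENNReal.ofReal |c i - c (i + 1)| ^ 2 := by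
  have h : 0 < t - 1 := by linarith
  have h0 : 0 < t := by linarith
  have h1 : |c k - c j| ≤ ∑ i ∈ Finset.Ico k j, |c i - c (i + 1)| := by
    have := dist_le_Ico_sum_dist c hkj
    simpa [Real.dist_eq] using this
  have h2 : (∑ i ∈ Finset.Ico k j, |c i - c (i + 1)|) ^ 2 ≤
      (∑ i ∈ Finset.Ico k j, (t ^ i)⁻¹) * ∑ i ∈ Finset.Ico k j, t ^ i * |c i - c (i + 1)| ^ 2 := by
    apply Finset.sum_sq_le_sum_mul_sum_of_sq_le_mul
    · intro i _; positivity
    · intro i _; positivity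
    · intro i _; field_simp; exact le_rfl
  have h3 : |c k - c j| ^ 2 ≤ t / (t - 1) * (t ^ k)⁻¹ *
      ∑ i ∈ Finset.Ico k j, t ^ i * |c i - c (i + 1)| ^ 2 := by
    refine (pow_le_pow_left₀ (abs_nonneg _) h1 2).trans (h2.trans ?_)
    gcongr
    exact sum_Ico_inv_le ht k j
  have h4 : t ^ k * |c k - c j| ^ 2 ≤ t / (t - 1) *
      ∑ i ∈ Finset.Ico k j, t ^ i * |c i - c (i + 1)| ^ 2 := by
    have hk : 0 < t ^ k := by positivity
    calc t ^ k * |c k - c j| ^ 2 ≤ t ^ k * (t / (t - 1) * (t ^ k)⁻¹ *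
          ∑ i ∈ Finset.Ico k j, t ^ i * |c i - c (i + 1)| ^ 2) := by gcongr
      _ = _ := by field_simp
  have := ENNReal.ofReal_le_ofReal h4
  rw [ENNReal.ofReal_mul (by positivity), ENNReal.ofReal_pow (abs_nonneg _), ENNReal.ofReal_mul (by positivity),
    ENNReal.ofReal_sum_of_nonneg (fun i _ => by positivity)] at this
  refine this.trans (le_of_eq ?_)
  congr 1
  refine Finset.sum_congr rfl fun i _ => ?_
  rw [ENNReal.ofReal_mul (by positivity), ENNReal.ofReal_pow (abs_nonneg _)]

/-! ### Pointwise bounds by oscillations at small scales -/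

/-- The oscillation of `u` on the ball of radius `2^{-i} r` around `x`, weighted by `t ^ i`. The
constants range over `ℚ`, so that the infimum is measurable in `x`. -/
def wosc {n : ℕ} (t q : ℝ) (u : Pt n → ℝ) (r : ℝ) (i : ℕ) (x : Pt n) : ℝ≥0∞ :=
  ⨅ c : ℚ, ENNReal.ofReal (t ^ i) * osc q u x (rad r i) c

/-- The sum of the weighted oscillations around `x` over all scales from the `k`-th downwards. -/
def tail {n : ℕ} (t q : ℝ) (u : Pt n → ℝ) (r : ℝ) (k : ℕ) (x : Pt n) : ℝ≥0∞ :=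
  ∑' i, if k ≤ i then wosc t q u r i x else 0

lemma measurable_wosc {n : ℕ} {t q : ℝ} {u : Pt n → ℝ} (hu : Measurable u) (r : ℝ) (i : ℕ) :
    Measurable (wosc t q u r i) :=
  Measurable.iInf fun _ => (measurable_osc hu _ _).const_mul _

lemma measurable_tail {n : ℕ} {t q : ℝ} {u : Pt n → ℝ} (hu : Measurable u) (r : ℝ) (k : ℕ) :
    Measurable (tail t q u r k) := by
  refine Measurable.tsum fun i => ?_
  split_ifs
  · exact measurable_wosc hu r i
  · exact measurable_const

/-- The constant in `exists_approx`. -/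
def LL (n : ℕ) (t q : ℝ) : ℝ≥0∞ :=
  KK n q * (1 + ENNReal.ofReal (t / (t - 1)) * (KK n q * 2))

/-- At a point where the one-sided differentiation property holds, almost optimal constants `c i`
on the balls of radius `2^{-i} r` form a chain leading to `u x`, and the weighted Cauchy–Schwarz
inequality along that chain bounds the distance from `c k` to `u x`. -/
lemma exists_approx {n : ℕ} {t q : ℝ} (ht : 1 < t) (hq : 0 < q) {u : Pt n → ℝ}
    (hu : Measurable u) {r : ℝ} (hr : 0 < r) {x : Pt n}
    (hx : ∀ (c : ℚ) (k : ℕ) (A : ℝ≥0∞), (∀ j ≥ k, osc q u x (rad r j) c ≤ A) →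
      ENNReal.ofReal |u x - c| ^ 2 ≤ A)
    (k : ℕ) {ε : ℝ≥0∞} (hε : ε ≠ 0) (hS : tail t q u r k x ≠ ⊤) :
    ∃ c : ℝ, ENNReal.ofReal (t ^ k) * osc q u x (rad r k) c ≤ tail t q u r k x + ε ∧
      ENNReal.ofReal (t ^ k) * ENNReal.ofReal |u x - c| ^ 2 ≤
        LL n t q * (tail t q u r k x + ε) := by
  have ht0 : 0 < t := by linarith
  obtain ⟨δ, hδ, hδs⟩ := ENNReal.exists_pos_sum_of_countable' hε ℕ
  have hfin : ∀ i, k ≤ i → wosc t q u r i x ≠ ⊤ := by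
    intro i hi
    refine ne_top_of_le_ne_top hS ?_
    have := ENNReal.le_tsum (f := fun i => if k ≤ i then wosc t q u r i x else 0) i
    simp only [if_pos hi] at this
    exact this
  have hex : ∀ i, ∃ c : ℚ, k ≤ i →
      ENNReal.ofReal (t ^ i) * osc q u x (rad r i) c ≤ wosc t q u r i x + δ i := by
    intro i
    by_cases hi : k ≤ i
    · have hlt : wosc t q u r i x < wosc t q u r i x + δ i :=
        ENNReal.lt_add_right (hfin i hi) (hδ i).ne'
      obtain ⟨c, hc⟩ := iInf_lt_iff.1 hlt
      exact ⟨c, fun _ => hc.le⟩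
    · exact ⟨0, fun h => absurd h hi⟩
  choose c hc using hex
  set T := tail t q u r k x + ε with hT
  let h : ℕ → ℝ≥0∞ := fun i => ENNReal.ofReal (t ^ i) * osc q u x (rad r i) (c i)
  have hsum : ∀ s : Finset ℕ, (∀ i ∈ s, k ≤ i) → ∑ i ∈ s, h i ≤ T := by
    intro s hs
    calc ∑ i ∈ s, h i ≤ ∑ i ∈ s, ((if k ≤ i then wosc t q u r i x else 0) + δ i) := by
          refine Finset.sum_le_sum fun i hi => ?_
          rw [if_pos (hs i hi)]
          exact hc i (hs i hi)
      _ = ∑ i ∈ s, (if k ≤ i then wosc t q u r i x else 0) + ∑ i ∈ s, δ i :=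
          Finset.sum_add_distrib
      _ ≤ _ := add_le_add (ENNReal.sum_le_tsum s) ((ENNReal.sum_le_tsum s).trans hδs.le)
  have hone : ∀ i, k ≤ i → h i ≤ T := by
    intro i hi
    have := hsum {i} (by simpa using hi)
    simpa using this
  have hstep : ∀ i, ENNReal.ofReal (t ^ i) * ENNReal.ofReal |(c i : ℝ) - c (i + 1)| ^ 2 ≤
      KK n q * (h i + h (i + 1)) := by
    intro i
    have hp := rad_pos hr (i + 1)
    have h2 : rad r i = 2 * rad r (i + 1) := by rw [rad_succ]; ring
    have h1 := dist_le_osc hq hu (x := x) (y := x) (w := x) (ρ₁ := rad r i) (ρ₂ := rad r (i + 1))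
      hp h2.le (by linarith) (ball_subset_ball (by linarith)) subset_rfl (c i) (c (i + 1))
    calc _ ≤ ENNReal.ofReal (t ^ i) *
          (KK n q * (osc q u x (rad r i) (c i) + osc q u x (rad r (i + 1)) (c (i + 1)))) := by
          gcongr
      _ = KK n q * (h i + ENNReal.ofReal (t ^ i) * osc q u x (rad r (i + 1)) (c (i + 1))) := by
          simp only [h]; ring
      _ ≤ _ := by
          simp only [h]
          gcongr
          · exact ht.le
          · omega
  have hchain : ∀ j, k ≤ j → ENNReal.ofReal (t ^ k) * ENNReal.ofReal |(c k : ℝ) - c j| ^ 2 ≤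
      ENNReal.ofReal (t / (t - 1)) * (KK n q * 2) * T := by
    intro j hj
    refine (chain_le ht (fun i => (c i : ℝ)) hj).trans ?_
    rw [mul_assoc]
    gcongr
    calc _ ≤ ∑ i ∈ Finset.Ico k j, KK n q * (h i + h (i + 1)) :=
          Finset.sum_le_sum fun i _ => hstep i
      _ = KK n q * (∑ i ∈ Finset.Ico k j, h i + ∑ i ∈ Finset.Ico (k + 1) (j + 1), h i) := by
          rw [← Finset.mul_sum, Finset.sum_add_distrib, Finset.sum_Ico_add']
      _ ≤ KK n q * (T + T) := by
          gcongr
          · exact hsum _ fun i hi => (Finset.mem_Ico.1 hi).1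
          · exact hsum _ fun i hi => by have := (Finset.mem_Ico.1 hi).1; omega
      _ = _ := by ring
  have hw0 : ENNReal.ofReal (t ^ k) ≠ 0 := by
    rw [Ne, ENNReal.ofReal_eq_zero, not_le]; positivity
  refine ⟨c k, hone k le_rfl, ?_⟩
  have hA : ENNReal.ofReal |u x - c k| ^ 2 ≤ LL n t q * T / ENNReal.ofReal (t ^ k) := by
    refine hx (c k) k _ fun j hj => ?_
    rw [ENNReal.le_div_iff_mul_le (Or.inl hw0) (Or.inl ENNReal.ofReal_ne_top), mul_comm]
    calc _ ≤ ENNReal.ofReal (t ^ k) * (KK n q * (osc q u x (rad r j) (c j) +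
            ENNReal.ofReal |(c k : ℝ) - c j| ^ 2)) := by
          gcongr
          exact osc_le_osc_add hq hu x (rad_pos hr j) _ _
      _ = KK n q * (ENNReal.ofReal (t ^ k) * osc q u x (rad r j) (c j) +
            ENNReal.ofReal (t ^ k) * ENNReal.ofReal |(c k : ℝ) - c j| ^ 2) := by ring
      _ ≤ KK n q * (T + ENNReal.ofReal (t / (t - 1)) * (KK n q * 2) * T) := by
          refine mul_le_mul_right (add_le_add (le_trans ?_ (hone j hj)) (hchain j hj)) _
          simp only [h]
          gcongr
          exact ht.le
      _ = _ := by rw [LL]; ring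
  rw [mul_comm]
  exact (ENNReal.le_div_iff_mul_le (Or.inl hw0) (Or.inl ENNReal.ofReal_ne_top)).1 hA

lemma add_sq_le' (a b : ℝ≥0∞) : (a + b) ^ 2 ≤ 4 * (a ^ 2 + b ^ 2) := by
  have := add_rpow_le' a b (p := ((2 : ℕ) : ℝ)) (by norm_num)
  simp only [ENNReal.rpow_natCast] at this
  norm_num at this
  exact this

/-- Pointwise bound of the difference `|u x - u y|` by oscillations around `x` and `y` at scales
comparable to or smaller than `|x - y|`. -/
lemma diff_le_tail {n : ℕ} {t q : ℝ} (ht : 1 < t) (hq : 0 < q) {u : Pt n → ℝ}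
    (hu : Measurable u) {r : ℝ} (hr : 0 < r) {x y : Pt n}
    (hx : ∀ (c : ℚ) (k : ℕ) (A : ℝ≥0∞), (∀ j ≥ k, osc q u x (rad r j) c ≤ A) →
      ENNReal.ofReal |u x - c| ^ 2 ≤ A)
    (hy : ∀ (c : ℚ) (k : ℕ) (A : ℝ≥0∞), (∀ j ≥ k, osc q u y (rad r j) c ≤ A) →
      ENNReal.ofReal |u y - c| ^ 2 ≤ A)
    {k : ℕ} (hk : dist x y ≤ rad r k / 2) :
    ENNReal.ofReal (t ^ k) * ENNReal.ofReal |u x - u y| ^ 2 ≤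
      16 * (LL n t q + KK n q) * (tail t q u r k x + tail t q u r k y) := by
  have ht0 : 0 < t := by linarith
  have hK := KK_ne_top n hq
  have hL : LL n t q ≠ ⊤ := by
    unfold LL
    finiteness
  have hC0 : LL n t q + KK n q ≠ 0 := by
    have := one_le_KK n hq
    exact (lt_of_lt_of_le one_pos (this.trans le_add_self)).ne'
  by_cases hS : tail t q u r k x + tail t q u r k y = ⊤
  · rw [hS, ENNReal.mul_top (mul_ne_zero (by norm_num) hC0)]
    exact le_top
  have hSx : tail t q u r k x ≠ ⊤ := fun h => hS (by simp [h])
  have hSy : tail t q u r k y ≠ ⊤ := fun h => hS (by simp [h])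
  have key : ∀ ε : ℝ≥0∞, ε ≠ 0 → ENNReal.ofReal (t ^ k) * ENNReal.ofReal |u x - u y| ^ 2 ≤
      16 * (LL n t q + KK n q) * (tail t q u r k x + tail t q u r k y + 2 * ε) := by
    intro ε hε
    obtain ⟨c, h1, h2⟩ := exists_approx ht hq hu hr hx k hε hSx
    obtain ⟨c', h1', h2'⟩ := exists_approx ht hq hu hr hy k hε hSy
    have hp := rad_pos hr k
    have hd := dist_le_osc hq hu (x := x) (y := y) (w := x) (ρ₁ := rad r k) (ρ₂ := rad r k)
      (ρ := rad r k / 2) (by linarith) (by linarith) (by linarith)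
      (ball_subset_ball (by linarith)) (ball_subset_ball' (by linarith)) c c'
    have hD : ENNReal.ofReal |u x - u y| ≤ ENNReal.ofReal |u x - c| +
        (ENNReal.ofReal |u y - c'| + ENNReal.ofReal |c - c'|) := by
      rw [← ENNReal.ofReal_add (by positivity) (by positivity),
        ← ENNReal.ofReal_add (by positivity) (by positivity)]
      refine ENNReal.ofReal_le_ofReal ?_
      have e1 := abs_sub_le (u x) c (u y)
      have e2 := abs_sub_le c c' (u y)
      rw [abs_sub_comm c' (u y)] at e2
      linarith
    have hD2 : ENNReal.ofReal |u x - u y| ^ 2 ≤ 16 * (ENNReal.ofReal |u x - c| ^ 2 +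
        ENNReal.ofReal |u y - c'| ^ 2 + ENNReal.ofReal |c - c'| ^ 2) := by
      calc _ ≤ 4 * (ENNReal.ofReal |u x - c| ^ 2 +
            (ENNReal.ofReal |u y - c'| + ENNReal.ofReal |c - c'|) ^ 2) :=
            (pow_le_pow_left₀ zero_le hD 2).trans (add_sq_le' _ _)
        _ ≤ 4 * (4 * ENNReal.ofReal |u x - c| ^ 2 +
            4 * (ENNReal.ofReal |u y - c'| ^ 2 + ENNReal.ofReal |c - c'| ^ 2)) := by
            gcongr
            · exact le_mul_of_one_le_left' (by norm_num)
            · exact add_sq_le' _ _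
        _ = _ := by ring
    calc _ ≤ ENNReal.ofReal (t ^ k) * (16 * (ENNReal.ofReal |u x - c| ^ 2 +
            ENNReal.ofReal |u y - c'| ^ 2 +
              KK n q * (osc q u x (rad r k) c + osc q u y (rad r k) c'))) := by
          gcongr
          refine hD2.trans ?_
          gcongr
      _ = 16 * (ENNReal.ofReal (t ^ k) * ENNReal.ofReal |u x - c| ^ 2 +
            ENNReal.ofReal (t ^ k) * ENNReal.ofReal |u y - c'| ^ 2 +
            KK n q * (ENNReal.ofReal (t ^ k) * osc q u x (rad r k) c +
              ENNReal.ofReal (t ^ k) * osc q u y (rad r k) c')) := by ring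
      _ ≤ 16 * (LL n t q * (tail t q u r k x + ε) + LL n t q * (tail t q u r k y + ε) +
            KK n q * ((tail t q u r k x + ε) + (tail t q u r k y + ε))) := by gcongr
      _ = _ := by ring
  refine ge_of_tendsto (b := ENNReal.ofReal (t ^ k) * ENNReal.ofReal |u x - u y| ^ 2)
    (x := nhdsWithin (0 : ℝ≥0∞) (Ioi 0))
    (f := fun ε => 16 * (LL n t q + KK n q) * (tail t q u r k x + tail t q u r k y + 2 * ε))
    ?_ ?_
  · have : Tendsto (fun ε : ℝ≥0∞ =>
        16 * (LL n t q + KK n q) * (tail t q u r k x + tail t q u r k y + 2 * ε)) (nhds 0)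
        (nhds (16 * (LL n t q + KK n q) * (tail t q u r k x + tail t q u r k y + 2 * 0))) := by
      refine ENNReal.Tendsto.const_mul ?_ (Or.inr (by finiteness))
      refine Tendsto.add tendsto_const_nhds ?_
      exact ENNReal.Tendsto.const_mul tendsto_id (Or.inr (by norm_num))
    simp only [mul_zero, add_zero] at this
    exact this.mono_left nhdsWithin_le_nhds
  · filter_upwards [self_mem_nhdsWithin] with ε hε
    exact key ε (ne_of_gt hε)

/-! ### The energy is bounded by the dyadic sum -/

lemma vol_rpow {n : ℕ} (hn : 1 ≤ n) (α : ℝ) (x : Pt n) {ρ : ℝ} (hρ : 0 < ρ) :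
    volume (ball x ρ) ^ (2 * α / (n : ℝ) - 1) =
      ENNReal.ofReal (ρ ^ (2 * α - n)) * volume (ball (0 : Pt n) 1) ^ (2 * α / (n : ℝ) - 1) := by
  have hn' : (n : ℝ) ≠ 0 := by positivity
  rw [vol_ball x hρ, ENNReal.mul_rpow_of_ne_top ENNReal.ofReal_ne_top (vol_ne_top _ _),
    ENNReal.ofReal_rpow_of_pos (by positivity), ← Real.rpow_natCast ρ n, ← Real.rpow_mul hρ.le]
  congr 3
  field_simp

lemma two_rpow_eq (α : ℝ) (k : ℕ) :
    (2:ℝ) ^ (2 * (k:ℝ) * α) = ((2:ℝ) ^ α) ^ k * ((2:ℝ) ^ α) ^ k := by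
  rw [← Real.rpow_natCast ((2:ℝ) ^ α) k, ← Real.rpow_mul (by norm_num),
    ← Real.rpow_add (by norm_num)]
  congr 1; ring

lemma Psi_eq {n : ℕ} (α q : ℝ) (u : Pt n → ℝ) (x₀ : Pt n) (r : ℝ) :
    Psi α q u x₀ r = (volume (ball x₀ r))⁻¹ *
      ∑' k : ℕ, ENNReal.ofReal ((2:ℝ) ^ (2 * (k:ℝ) * α)) *
        ∫⁻ x in ball x₀ r, ⨅ c : ℝ, osc q u x (rad r k) c := by
  rw [← ENNReal.tsum_mul_left]
  refine tsum_congr fun k => ?_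
  rw [mul_left_comm]
  rfl

/-- Integrating `f x + f y` over the pairs with `|x - y| ≤ ρ`: by symmetry both summands contribute
the same, and for fixed `x` the points `y` fill at most a ball of radius `ρ`. -/
lemma near_diag {n : ℕ} {S : Set (Pt n)} {f : Pt n → ℝ≥0∞} (hf : Measurable f)
    {ρ : ℝ} (hρ : 0 < ρ) :
    ∫⁻ x in S, ∫⁻ y in S, (if dist x y ≤ ρ then f x + f y else 0) ≤
      2 * (ENNReal.ofReal (ρ ^ n) * volume (ball (0 : Pt n) 1)) * ∫⁻ x in S, f x := by
  have hms : MeasurableSet {p : Pt n × Pt n | dist p.1 p.2 ≤ ρ} :=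
    measurableSet_le (measurable_fst.dist measurable_snd) measurable_const
  have hmeas : ∀ g : Pt n × Pt n → ℝ≥0∞, Measurable g →
      Measurable fun p : Pt n × Pt n => if dist p.1 p.2 ≤ ρ then g p else 0 :=
    fun g hg => Measurable.ite hms hg measurable_const
  have hone : ∫⁻ x in S, ∫⁻ y in S, (if dist x y ≤ ρ then f x else 0) ≤
      (ENNReal.ofReal (ρ ^ n) * volume (ball (0 : Pt n) 1)) * ∫⁻ x in S, f x := by
    rw [← lintegral_const_mul _ hf]
    refine lintegral_mono fun x => ?_
    calc ∫⁻ y in S, (if dist x y ≤ ρ then f x else 0)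
        ≤ ∫⁻ y, (if dist x y ≤ ρ then f x else 0) := setLIntegral_le_lintegral _ _
      _ = ∫⁻ y, (closedBall x ρ).indicator (fun _ => f x) y := by
          refine lintegral_congr fun y => ?_
          simp [indicator, dist_comm]
      _ = f x * volume (closedBall x ρ) := by
          rw [lintegral_indicator measurableSet_closedBall, setLIntegral_const]
      _ = _ := by
          rw [Measure.addHaar_closedBall _ _ hρ.le, mul_comm]
          simp
  have hsplit : ∀ x y : Pt n, (if dist x y ≤ ρ then f x + f y else 0) =
      (if dist x y ≤ ρ then f x else 0) + (if dist x y ≤ ρ then f y else 0) := by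
    intro x y; split_ifs <;> simp
  have hm1 : Measurable fun p : Pt n × Pt n => if dist p.1 p.2 ≤ ρ then f p.1 else 0 :=
    hmeas _ (hf.comp measurable_fst)
  have hm2 : Measurable fun p : Pt n × Pt n => if dist p.1 p.2 ≤ ρ then f p.2 else 0 :=
    hmeas _ (hf.comp measurable_snd)
  have e : ∫⁻ x in S, ∫⁻ y in S, (if dist x y ≤ ρ then f x + f y else 0) =
      (∫⁻ x in S, ∫⁻ y in S, (if dist x y ≤ ρ then f x else 0)) +
      ∫⁻ x in S, ∫⁻ y in S, (if dist x y ≤ ρ then f y else 0) := by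
    have hi : Measurable fun x => ∫⁻ y in S, (if dist x y ≤ ρ then f x else 0) :=
      Measurable.lintegral_prod_right' hm1
    have inner : ∀ x : Pt n, ∫⁻ y in S, (if dist x y ≤ ρ then f x + f y else 0) =
        (∫⁻ y in S, (if dist x y ≤ ρ then f x else 0)) +
          ∫⁻ y in S, (if dist x y ≤ ρ then f y else 0) := by
      intro x
      have hmx : Measurable fun y => if dist x y ≤ ρ then f x else 0 :=
        Measurable.ite (measurableSet_le (measurable_const.dist measurable_id) measurable_const)
          measurable_const measurable_const
      exact (lintegral_congr fun y => hsplit x y).trans (lintegral_add_left hmx _)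
    exact (lintegral_congr inner).trans (lintegral_add_left hi _)
  have hswap : ∫⁻ x in S, ∫⁻ y in S, (if dist x y ≤ ρ then f y else 0) =
      ∫⁻ x in S, ∫⁻ y in S, (if dist x y ≤ ρ then f x else 0) := by
    rw [lintegral_lintegral_swap (f := fun x y => if dist x y ≤ ρ then f y else 0)
      hm2.aemeasurable]
    refine lintegral_congr fun x => lintegral_congr fun y => ?_
    rw [dist_comm]
  rw [e, hswap, mul_assoc, two_mul]
  exact add_le_add hone hone

/-- Exchanging the sums over `k ≤ i`, the inner sum of `t ^ k` is dominated by its last term `t ^ i`.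
The factor `KK n q` comes from the passage from rational to real constants. -/
lemma sum_tail_le {n : ℕ} {t q : ℝ} (ht : 1 < t) (hq : 0 < q) {u : Pt n → ℝ}
    (hu : Measurable u) {r : ℝ} (hr : 0 < r) (S : Set (Pt n)) :
    ∑' k, ENNReal.ofReal (t ^ k) * ∫⁻ x in S, tail t q u r k x ≤
      ENNReal.ofReal (t / (t - 1)) * KK n q *
        ∑' i, ENNReal.ofReal (t ^ i * t ^ i) * ∫⁻ x in S, ⨅ c : ℝ, osc q u x (rad r i) c := by
  have ht0 : 0 < t := by linarith
  have ht1 : 0 < t - 1 := by linarith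
  have h1 : ∀ k, ∫⁻ x in S, tail t q u r k x =
      ∑' i, if k ≤ i then ∫⁻ x in S, wosc t q u r i x else 0 := by
    intro k
    unfold tail
    rw [lintegral_tsum]
    · refine tsum_congr fun i => ?_
      split_ifs <;> simp
    · intro i
      split_ifs
      · exact (measurable_wosc hu r i).aemeasurable
      · exact aemeasurable_const
  have h2 : ∀ i, ∫⁻ x in S, wosc t q u r i x ≤
      ENNReal.ofReal (t ^ i) * KK n q * ∫⁻ x in S, ⨅ c : ℝ, osc q u x (rad r i) c := by
    intro i
    rw [← lintegral_const_mul' _ _ (ENNReal.mul_ne_top ENNReal.ofReal_ne_top (KK_ne_top n hq))]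
    refine lintegral_mono fun x => ?_
    unfold wosc
    rw [← ENNReal.mul_iInf_of_ne _ ENNReal.ofReal_ne_top, mul_assoc]
    · gcongr
      exact iInf_rat_le hq hu x (rad_pos hr i)
    · rw [Ne, ENNReal.ofReal_eq_zero, not_le]; positivity
  calc _ = ∑' k, ∑' i, (if k ≤ i then ENNReal.ofReal (t ^ k) else 0) *
        ∫⁻ x in S, wosc t q u r i x := by
        refine tsum_congr fun k => ?_
        rw [h1, ← ENNReal.tsum_mul_left]
        refine tsum_congr fun i => ?_
        split_ifs <;> simp
    _ = ∑' i, (∑' k, (if k ≤ i then ENNReal.ofReal (t ^ k) else 0)) *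
        ∫⁻ x in S, wosc t q u r i x := by
        rw [ENNReal.tsum_comm]
        refine tsum_congr fun i => ?_
        rw [ENNReal.tsum_mul_right]
    _ ≤ ∑' i, ENNReal.ofReal (t / (t - 1) * t ^ i) * (ENNReal.ofReal (t ^ i) * KK n q *
          ∫⁻ x in S, ⨅ c : ℝ, osc q u x (rad r i) c) := by
        refine ENNReal.tsum_le_tsum fun i => ?_
        refine mul_le_mul' ?_ (h2 i)
        exact tsum_geom_le ht (fun k => k ≤ i) fun k hk => pow_le_pow_right₀ ht.le hk
    _ = _ := by
        rw [← ENNReal.tsum_mul_left]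
        refine tsum_congr fun i => ?_
        rw [ENNReal.ofReal_mul (by positivity), ENNReal.ofReal_mul (by positivity)]
        ring

lemma exists_scale {r d : ℝ} (hd : 0 < d) (hdr : d ≤ r / 2) :
    ∃ k : ℕ, rad r k / 4 ≤ d ∧ d ≤ rad r k / 2 := by
  obtain ⟨k, h1, h2⟩ := exists_nat_pow_near (x := r / (2 * d)) (y := 2)
    (by rw [le_div_iff₀ (by positivity)]; linarith) (by norm_num)
  refine ⟨k, ?_, ?_⟩
  · rw [rad_eq, div_div, div_le_iff₀ (by positivity)]
    rw [div_lt_iff₀ (by positivity), pow_succ] at h2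
    linarith
  · rw [rad_eq, div_div, le_div_iff₀ (by positivity)]
    rw [le_div_iff₀ (by positivity)] at h1
    linarith

lemma scale_identity {n : ℕ} {α r : ℝ} (hr : 0 < r) (k : ℕ) :
    (rad r k / 4) ^ (-((n : ℝ) + 2 * α)) * (((2:ℝ) ^ α) ^ k)⁻¹ * (rad r k / 2) ^ n =
      (4:ℝ) ^ ((n : ℝ) + 2 * α) * ((2:ℝ) ^ n)⁻¹ * r ^ (-(2 * α)) * ((2:ℝ) ^ α) ^ k := by
  have hp := rad_pos hr k
  have h2 : (0:ℝ) < 2 ^ k := by positivity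
  have e1 : (rad r k / 4) ^ (-((n : ℝ) + 2 * α)) =
      (4:ℝ) ^ ((n : ℝ) + 2 * α) * ((rad r k ^ n)⁻¹ * rad r k ^ (-(2 * α))) := by
    rw [Real.div_rpow hp.le (by norm_num), Real.rpow_neg (by norm_num : (0:ℝ) ≤ 4), div_inv_eq_mul,
      mul_comm, neg_add, Real.rpow_add hp, Real.rpow_neg hp.le, Real.rpow_natCast]
  have e2 : rad r k ^ (-(2 * α)) = r ^ (-(2 * α)) * (((2:ℝ) ^ α) ^ k * ((2:ℝ) ^ α) ^ k) := by
    rw [rad, Real.mul_rpow (by positivity) hr.le, ← Real.rpow_mul (by norm_num), mul_comm,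
      ← two_rpow_eq]
    congr 2; ring
  rw [e1, e2, div_pow]
  field_simp

/-- The bound of `Phi` by `Psi`; it holds for all `q > 0`. -/
theorem lower_bound {n : ℕ} (hn : 1 ≤ n) {α q : ℝ} (hα : 0 < α) (hq : 0 < q) :
    ∃ C : ℝ≥0∞, C ≠ ⊤ ∧ ∀ u : Pt n → ℝ, Measurable u → ∀ (x₀ : Pt n) (r : ℝ), 0 < r →
      Phi α u x₀ (r / 16) ≤ C * Psi α q u x₀ r := by
  set t : ℝ := (2:ℝ) ^ α with ht_def
  have ht : 1 < t := Real.one_lt_rpow (by norm_num) hα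
  have ht0 : 0 < t := by linarith
  set ω : ℝ≥0∞ := volume (ball (0 : Pt n) 1) with hω
  have hω0 : ω ≠ 0 := vol_ne_zero _ one_pos
  have hωt : ω ≠ ⊤ := vol_ne_top _ _
  set D : ℝ := (n : ℝ) + 2 * α with hD
  have hD0 : 0 < D := by positivity
  set C1 : ℝ≥0∞ := 16 * (LL n t q + KK n q) with hC1
  have hK := KK_ne_top n hq
  have hC1t : C1 ≠ ⊤ := by
    rw [hC1]; unfold LL; finiteness
  set A : ℝ≥0∞ := ENNReal.ofReal ((4:ℝ) ^ D * ((2:ℝ) ^ n)⁻¹) with hA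
  set L : ℝ≥0∞ := ENNReal.ofReal (t / (t - 1)) * KK n q with hL
  refine ⟨ENNReal.ofReal ((1 / 16 : ℝ) ^ (2 * α - n)) * ω ^ (2 * α / (n : ℝ) - 1) * ω *
    (2 * C1 * ω * A * L), ?_, ?_⟩
  · have := ENNReal.rpow_ne_top_of_ne_zero (y := 2 * α / (n : ℝ) - 1) hω0 hωt
    finiteness
  intro u hu x₀ r hr
  have hgood := ae_le_of_osc_le hq hu hr
  set B : Set (Pt n) := ball x₀ (r / 16) with hB
  have hmain : ∫⁻ x in B, ∫⁻ y in B, ENNReal.ofReal (|u x - u y| ^ 2 / ‖x - y‖ ^ D) ≤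
      (2 * C1 * ω * A * L) * ENNReal.ofReal (r ^ (-(2 * α))) *
        ∑' i, ENNReal.ofReal (t ^ i * t ^ i) *
          ∫⁻ x in ball x₀ r, ⨅ c : ℝ, osc q u x (rad r i) c := by
    let P : ℕ → ℝ≥0∞ := fun k =>
      ENNReal.ofReal ((rad r k / 4) ^ (-D) * (t ^ k)⁻¹) * C1
    let G : ℕ → Pt n → Pt n → ℝ≥0∞ := fun k x y =>
      if dist x y ≤ rad r k / 2 then tail t q u r k x + tail t q u r k y else 0
    have hG : ∀ k, Measurable fun p : Pt n × Pt n => P k * G k p.1 p.2 := by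
      intro k
      refine Measurable.const_mul (Measurable.ite ?_ ?_ measurable_const) _
      · exact measurableSet_le (measurable_fst.dist measurable_snd) measurable_const
      · exact ((measurable_tail hu r k).comp measurable_fst).add
          ((measurable_tail hu r k).comp measurable_snd)
    have hpt : ∀ x ∈ B, ∀ y ∈ B,
        (∀ (c : ℚ) (k : ℕ) (A : ℝ≥0∞), (∀ j ≥ k, osc q u x (rad r j) c ≤ A) →
          ENNReal.ofReal |u x - c| ^ 2 ≤ A) →
        (∀ (c : ℚ) (k : ℕ) (A : ℝ≥0∞), (∀ j ≥ k, osc q u y (rad r j) c ≤ A) →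
          ENNReal.ofReal |u y - c| ^ 2 ≤ A) →
        ENNReal.ofReal (|u x - u y| ^ 2 / ‖x - y‖ ^ D) ≤ ∑' k, P k * G k x y := by
      intro x hx y hy gx gy
      by_cases hxy : x = y
      · subst hxy; simp
      have hd : 0 < dist x y := dist_pos.2 hxy
      have hdr : dist x y ≤ r / 2 := by
        have h1 := dist_triangle_right x y x₀
        rw [hB, mem_ball] at hx hy
        linarith
      obtain ⟨k, hk1, hk2⟩ := exists_scale hd hdr
      refine le_trans ?_ (ENNReal.le_tsum k)
      have hdiff := diff_le_tail ht hq hu hr gx gy hk2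
      have hp := rad_pos hr k
      have hle : |u x - u y| ^ 2 / ‖x - y‖ ^ D ≤
          (rad r k / 4) ^ (-D) * (t ^ k)⁻¹ * (t ^ k * |u x - u y| ^ 2) := by
        rw [← dist_eq_norm, div_eq_mul_inv, ← Real.rpow_neg hd.le]
        have : dist x y ^ (-D) ≤ (rad r k / 4) ^ (-D) :=
          Real.rpow_le_rpow_of_nonpos (by positivity) hk1 (by linarith)
        calc |u x - u y| ^ 2 * dist x y ^ (-D) ≤ |u x - u y| ^ 2 * (rad r k / 4) ^ (-D) := by
              gcongr
          _ = _ := by field_simp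
      refine (ENNReal.ofReal_le_ofReal hle).trans ?_
      rw [ENNReal.ofReal_mul (by positivity), ENNReal.ofReal_mul (p := t ^ k) (by positivity),
        ENNReal.ofReal_pow (abs_nonneg _)]
      simp only [P, G, if_pos hk2]
      rw [mul_assoc]
      gcongr
    calc ∫⁻ x in B, ∫⁻ y in B, ENNReal.ofReal (|u x - u y| ^ 2 / ‖x - y‖ ^ D)
        ≤ ∫⁻ x in B, ∫⁻ y in B, ∑' k, P k * G k x y := by
          refine lintegral_mono_ae ?_
          filter_upwards [ae_restrict_of_ae hgood, ae_restrict_mem measurableSet_ball] with x gx hx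
          refine lintegral_mono_ae ?_
          filter_upwards [ae_restrict_of_ae hgood, ae_restrict_mem measurableSet_ball] with y gy hy
          exact hpt x hx y hy gx gy
      _ = ∑' k, P k * ∫⁻ x in B, ∫⁻ y in B, G k x y := by
          have e1 : ∀ x, ∫⁻ y in B, ∑' k, P k * G k x y = ∑' k, ∫⁻ y in B, P k * G k x y :=
            fun x => lintegral_tsum fun k => ((hG k).comp measurable_prodMk_left).aemeasurable
          simp_rw [e1]
          rw [lintegral_tsum fun k => (Measurable.lintegral_prod_right' (hG k)).aemeasurable]
          refine tsum_congr fun k => ?_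
          have hP : P k ≠ ⊤ := ENNReal.mul_ne_top ENNReal.ofReal_ne_top hC1t
          rw [← lintegral_const_mul' _ _ hP]
          refine lintegral_congr fun x => ?_
          rw [lintegral_const_mul' _ _ hP]
      _ ≤ ∑' k, P k * (2 * (ENNReal.ofReal ((rad r k / 2) ^ n) * ω) *
            ∫⁻ x in B, tail t q u r k x) := by
          refine ENNReal.tsum_le_tsum fun k => ?_
          gcongr
          exact near_diag (measurable_tail hu r k) (by have := rad_pos hr k; positivity)
      _ = 2 * C1 * ω * A * ENNReal.ofReal (r ^ (-(2 * α))) *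
            ∑' k, ENNReal.ofReal (t ^ k) * ∫⁻ x in B, tail t q u r k x := by
          rw [← ENNReal.tsum_mul_left]
          refine tsum_congr fun k => ?_
          have hp := rad_pos hr k
          have : ENNReal.ofReal ((rad r k / 4) ^ (-D) * (t ^ k)⁻¹) *
              ENNReal.ofReal ((rad r k / 2) ^ n) =
              A * ENNReal.ofReal (r ^ (-(2 * α))) * ENNReal.ofReal (t ^ k) := by
            rw [hA, ← ENNReal.ofReal_mul (by positivity), ← ENNReal.ofReal_mul (by positivity),
              ← ENNReal.ofReal_mul (by positivity)]
            exact congrArg ENNReal.ofReal (scale_identity hr k)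
          calc _ = 2 * C1 * ω * (ENNReal.ofReal ((rad r k / 4) ^ (-D) * (t ^ k)⁻¹) *
                ENNReal.ofReal ((rad r k / 2) ^ n)) * ∫⁻ x in B, tail t q u r k x := by
                simp only [P]; ring
            _ = _ := by rw [this]; ring
      _ ≤ 2 * C1 * ω * A * ENNReal.ofReal (r ^ (-(2 * α))) *
            (L * ∑' i, ENNReal.ofReal (t ^ i * t ^ i) *
              ∫⁻ x in B, ⨅ c : ℝ, osc q u x (rad r i) c) := by
          gcongr
          exact sum_tail_le ht hq hu hr B
      _ ≤ 2 * C1 * ω * A * ENNReal.ofReal (r ^ (-(2 * α))) *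
            (L * ∑' i, ENNReal.ofReal (t ^ i * t ^ i) *
              ∫⁻ x in ball x₀ r, ⨅ c : ℝ, osc q u x (rad r i) c) := by
          gcongr
          exact ball_subset_ball (by linarith)
      _ = _ := by ring
  set W : ℝ≥0∞ := ∑' i, ENNReal.ofReal (t ^ i * t ^ i) *
          ∫⁻ x in ball x₀ r, ⨅ c : ℝ, osc q u x (rad r i) c with hW
  have hPsi : W = ENNReal.ofReal (r ^ n) * ω * Psi α q u x₀ r := by
    rw [Psi_eq, ← vol_ball x₀ hr, ← mul_assoc,
      ENNReal.mul_inv_cancel (vol_ne_zero _ hr) (vol_ne_top _ _), one_mul, hW]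
    refine tsum_congr fun i => ?_
    rw [two_rpow_eq]
  unfold Phi
  rw [vol_rpow hn α x₀ (by positivity)]
  refine (mul_le_mul_right hmain _).trans (le_of_eq ?_)
  rw [hPsi]
  have hr1 : ENNReal.ofReal ((r / 16) ^ (2 * α - n)) * ENNReal.ofReal (r ^ (-(2 * α))) *
      ENNReal.ofReal (r ^ n) = ENNReal.ofReal ((1 / 16 : ℝ) ^ (2 * α - n)) := by
    rw [← ENNReal.ofReal_mul (by positivity), ← ENNReal.ofReal_mul (by positivity)]
    congr 1
    rw [show r / 16 = (1 / 16) * r by ring, Real.mul_rpow (by norm_num) hr.le, mul_assoc, mul_assoc,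
      ← Real.rpow_natCast r n, ← Real.rpow_add hr, ← Real.rpow_add hr]
    ring_nf
    simp
  rw [← hr1]
  ring

/-! ### The dyadic sum is bounded by the energy -/

/-- Jensen's inequality for the exponents `q ≤ 2`. -/
lemma osc_le_sq_mean {n : ℕ} {q : ℝ} (hq : 0 < q) (hq2 : q ≤ 2) {u : Pt n → ℝ}
    (hu : Measurable u) (x : Pt n) {ρ : ℝ} (hρ : 0 < ρ) (c : ℝ) :
    osc q u x ρ c ≤
      (volume (ball x ρ))⁻¹ * ∫⁻ z in ball x ρ, ENNReal.ofReal (|u z - c| ^ 2) := by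
  set ν : Measure (Pt n) := (volume (ball x ρ))⁻¹ • volume.restrict (ball x ρ) with hν
  have : IsProbabilityMeasure ν := by
    constructor
    rw [hν, Measure.smul_apply, Measure.restrict_apply_univ, smul_eq_mul,
      ENNReal.inv_mul_cancel (vol_ne_zero x hρ) (vol_ne_top x ρ)]
  have h := eLpNorm'_le_eLpNorm'_of_exponent_le (f := fun z => u z - c) hq hq2 ν
    (hu.sub_const c).aestronglyMeasurable
  have e : ∀ p : ℝ, 0 < p → ∫⁻ z, ‖u z - c‖ₑ ^ p ∂ν =
      (volume (ball x ρ))⁻¹ * ∫⁻ z in ball x ρ, ENNReal.ofReal (|u z - c| ^ p) := by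
    intro p hp
    rw [hν, lintegral_smul_measure, smul_eq_mul]
    congr 1
    refine lintegral_congr fun z => ?_
    rw [ofReal_abs_rpow _ hp, Real.enorm_eq_ofReal_abs]
  simp only [eLpNorm', e q hq, e 2 two_pos, Real.rpow_two] at h
  have h2 := ENNReal.rpow_le_rpow h (z := 2) (by norm_num)
  rw [← ENNReal.rpow_mul, ← ENNReal.rpow_mul, one_div_mul_cancel two_ne_zero, ENNReal.rpow_one,
    one_div_mul_eq_div] at h2
  exact h2

/-- The infimum over `c` is at most the average over `c = u w` with `w` in the ball. -/
lemma iInf_osc_le {n : ℕ} {q : ℝ} (hq : 0 < q) (hq2 : q ≤ 2) {u : Pt n → ℝ}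
    (hu : Measurable u) (x : Pt n) {ρ : ℝ} (hρ : 0 < ρ) :
    ⨅ c : ℝ, osc q u x ρ c ≤ (volume (ball x ρ))⁻¹ * ((volume (ball x ρ))⁻¹ *
      ∫⁻ w in ball x ρ, ∫⁻ z in ball x ρ, ENNReal.ofReal (|u z - u w| ^ 2)) := by
  have hV : (volume (ball x ρ))⁻¹ ≠ ⊤ := ENNReal.inv_ne_top.2 (vol_ne_zero x hρ)
  rw [← lintegral_const_mul' _ _ hV]
  calc ⨅ c : ℝ, osc q u x ρ c
      = (volume (ball x ρ))⁻¹ * ∫⁻ w in ball x ρ, ⨅ c : ℝ, osc q u x ρ c := by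
        rw [setLIntegral_const, mul_comm, mul_assoc,
          ENNReal.mul_inv_cancel (vol_ne_zero x hρ) (vol_ne_top x ρ), mul_one]
    _ ≤ _ := by
        gcongr with w
        exact (iInf_le _ (u w)).trans (osc_le_sq_mean hq hq2 hu x hρ (u w))

lemma meas_diff {n : ℕ} {u : Pt n → ℝ} (hu : Measurable u) :
    Measurable fun p : Pt n × Pt n => ENNReal.ofReal (|u p.2 - u p.1| ^ 2) := by
  have : Measurable fun p : Pt n × Pt n => |u p.2 - u p.1| :=
    ((hu.comp measurable_snd).sub (hu.comp measurable_fst)).abs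
  exact (this.pow_const 2).ennreal_ofReal

/-- Integrating the mean oscillation over the centres: by Tonelli, the centres cost one factor of
the volume of the small ball. -/
lemma lintegral_iInf_osc_le {n : ℕ} {q : ℝ} (hq : 0 < q) (hq2 : q ≤ 2) {u : Pt n → ℝ}
    (hu : Measurable u) (x₀ : Pt n) {r ρ : ℝ} (hρ : 0 < ρ) (hρr : ρ ≤ r) :
    ∫⁻ x in ball x₀ r, ⨅ c : ℝ, osc q u x ρ c ≤
      (volume (ball (0 : Pt n) ρ))⁻¹ * ∫⁻ w in ball x₀ (16 * r), ∫⁻ z in ball x₀ (16 * r),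
        (if dist z w < 2 * ρ then ENNReal.ofReal (|u z - u w| ^ 2) else 0) := by
  have hr : 0 < r := hρ.trans_le hρr
  set V := volume (ball (0 : Pt n) ρ) with hV
  have hVx : ∀ x : Pt n, volume (ball x ρ) = V := fun x => Measure.addHaar_ball_center _ _ _
  have hV0 : V ≠ 0 := vol_ne_zero _ hρ
  have hVt : V ≠ ⊤ := vol_ne_top _ _
  have hVi : V⁻¹ ≠ ⊤ := ENNReal.inv_ne_top.2 hV0
  set B := ball x₀ (16 * r) with hB
  let F : Pt n → Pt n → ℝ≥0∞ := fun w z =>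
    if dist z w < 2 * ρ then ENNReal.ofReal (|u z - u w| ^ 2) else 0
  have hF : Measurable fun p : Pt n × Pt n => F p.1 p.2 :=
    Measurable.ite (measurableSet_lt (measurable_snd.dist measurable_fst) measurable_const)
      (meas_diff hu) measurable_const
  let f : Pt n → ℝ≥0∞ := fun w => ∫⁻ z in B, F w z
  have hf : Measurable f := Measurable.lintegral_prod_right' hF
  have hin : ∀ x ∈ ball x₀ r, ∫⁻ w in ball x ρ, ∫⁻ z in ball x ρ,
      ENNReal.ofReal (|u z - u w| ^ 2) ≤ ∫⁻ w in B, (if dist x w < ρ then f w else 0) := by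
    intro x hx
    have hsub : ball x ρ ⊆ B := ball_subset_ball' (by rw [mem_ball] at hx; linarith)
    calc ∫⁻ w in ball x ρ, ∫⁻ z in ball x ρ, ENNReal.ofReal (|u z - u w| ^ 2)
        ≤ ∫⁻ w in ball x ρ, (if dist x w < ρ then f w else 0) := by
          refine setLIntegral_mono' measurableSet_ball fun w hw => ?_
          rw [mem_ball] at hw
          rw [if_pos (by rwa [dist_comm])]
          calc ∫⁻ z in ball x ρ, ENNReal.ofReal (|u z - u w| ^ 2) = ∫⁻ z in ball x ρ, F w z := by
                refine setLIntegral_congr_fun measurableSet_ball fun z hz => ?_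
                rw [mem_ball] at hz
                have := dist_triangle_right z w x
                simp only [F]
                rw [if_pos (by linarith)]
            _ ≤ _ := lintegral_mono_set hsub
      _ ≤ _ := lintegral_mono_set hsub
  have hmI : Measurable fun p : Pt n × Pt n => if dist p.1 p.2 < ρ then f p.2 else 0 :=
    Measurable.ite (measurableSet_lt (measurable_fst.dist measurable_snd) measurable_const)
      (hf.comp measurable_snd) measurable_const
  calc ∫⁻ x in ball x₀ r, ⨅ c : ℝ, osc q u x ρ c
      ≤ ∫⁻ x in ball x₀ r, V⁻¹ * (V⁻¹ * ∫⁻ w in B, (if dist x w < ρ then f w else 0)) := by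
        refine setLIntegral_mono' measurableSet_ball fun x hx => ?_
        have := iInf_osc_le hq hq2 hu x hρ
        rw [hVx] at this
        refine this.trans ?_
        exact mul_le_mul_right (mul_le_mul_right (hin x hx) _) _
    _ = V⁻¹ * (V⁻¹ * ∫⁻ x in ball x₀ r, ∫⁻ w in B, (if dist x w < ρ then f w else 0)) := by
        rw [lintegral_const_mul' _ _ hVi, lintegral_const_mul' _ _ hVi]
    _ = V⁻¹ * (V⁻¹ * ∫⁻ w in B, ∫⁻ x in ball x₀ r, (if dist x w < ρ then f w else 0)) := by
        rw [lintegral_lintegral_swap (f := fun x w => if dist x w < ρ then f w else 0)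
          hmI.aemeasurable]
    _ ≤ V⁻¹ * (V⁻¹ * ∫⁻ w in B, V * f w) := by
        gcongr with w
        calc ∫⁻ x in ball x₀ r, (if dist x w < ρ then f w else 0)
            ≤ ∫⁻ x, (if dist x w < ρ then f w else 0) := setLIntegral_le_lintegral _ _
          _ = ∫⁻ x, (ball w ρ).indicator (fun _ => f w) x := by
              refine lintegral_congr fun x => ?_
              simp [indicator]
          _ = V * f w := by
              rw [lintegral_indicator measurableSet_ball, setLIntegral_const, hVx, mul_comm]
    _ = V⁻¹ * ∫⁻ w in B, f w := by
        rw [lintegral_const_mul' _ _ hVt, ← mul_assoc V⁻¹ V, ENNReal.inv_mul_cancel hV0 hVt,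
          one_mul]

/-- Summing the dyadic kernels `2^{2kα} |B_k|⁻¹ 1_{|z - w| < 2ρ_k}` yields the singular kernel
`|z - w|^{-(n + 2α)}`. -/
lemma kernel_sum_le {n : ℕ} {α : ℝ} (hα : 0 < α) {r d a : ℝ} (hr : 0 < r) (hd : 0 ≤ d)
    (h0 : d = 0 → a = 0) :
    ∑' k : ℕ, ENNReal.ofReal ((2:ℝ) ^ (2 * (k:ℝ) * α)) * ((volume (ball (0 : Pt n) (rad r k)))⁻¹ *
      (if d < 2 * rad r k then ENNReal.ofReal (a ^ 2) else 0)) ≤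
    (volume (ball (0 : Pt n) 1))⁻¹ * ENNReal.ofReal ((2:ℝ) ^ ((n : ℝ) + 2 * α) /
      ((2:ℝ) ^ ((n : ℝ) + 2 * α) - 1) * (2:ℝ) ^ ((n : ℝ) + 2 * α)) * ENNReal.ofReal (r ^ (2 * α)) *
      ENNReal.ofReal (a ^ 2 / d ^ ((n : ℝ) + 2 * α)) := by
  set D : ℝ := (n : ℝ) + 2 * α with hD
  have hD0 : 0 < D := by positivity
  set b : ℝ := (2:ℝ) ^ D with hb_def
  have hb : 1 < b := Real.one_lt_rpow (by norm_num) hD0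
  have hb1 : 0 < b - 1 := by linarith
  have hb0 : 0 < b := by linarith
  rcases hd.eq_or_lt with hd0 | hd0
  · rw [h0 hd0.symm]; simp
  have hsum := tsum_geom_le (X := (2 * r / d) ^ D) hb (fun k => d < 2 * rad r k) (by
    intro k hk
    rw [hb_def, ← Real.rpow_natCast, ← Real.rpow_mul (by norm_num), mul_comm D,
      Real.rpow_mul (by norm_num), Real.rpow_natCast]
    refine Real.rpow_le_rpow (by positivity) ?_ hD0.le
    rw [rad_eq, mul_div_assoc', lt_div_iff₀ (by positivity)] at hk
    rw [le_div_iff₀ hd0]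
    linarith)
  have hterm : ∀ k : ℕ, ENNReal.ofReal ((2:ℝ) ^ (2 * (k:ℝ) * α)) *
      ((volume (ball (0 : Pt n) (rad r k)))⁻¹ *
        (if d < 2 * rad r k then ENNReal.ofReal (a ^ 2) else 0)) =
      (volume (ball (0 : Pt n) 1))⁻¹ * ENNReal.ofReal ((r ^ n)⁻¹) * ENNReal.ofReal (a ^ 2) *
        (if d < 2 * rad r k then ENNReal.ofReal (b ^ k) else 0) := by
    intro k
    have hp := rad_pos hr k
    by_cases hk : d < 2 * rad r k
    · rw [if_pos hk, if_pos hk, vol_ball _ hp,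
        ENNReal.mul_inv (Or.inr (vol_ne_top _ _)) (Or.inl ENNReal.ofReal_ne_top),
        ← ENNReal.ofReal_inv_of_pos (by positivity)]
      have e : (2:ℝ) ^ (2 * (k:ℝ) * α) * (rad r k ^ n)⁻¹ = (r ^ n)⁻¹ * b ^ k := by
        have e1 : b ^ k = (2:ℝ) ^ (2 * (k:ℝ) * α) * ((2:ℝ) ^ k) ^ n := by
          rw [hb_def, ← Real.rpow_natCast (2 ^ D), ← Real.rpow_mul (by norm_num), ← pow_mul,
            ← Real.rpow_natCast 2 (k * n), ← Real.rpow_add (by norm_num), hD]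
          congr 1; push_cast; ring
        rw [e1, rad_eq, div_pow]
        field_simp
      have e' := congrArg ENNReal.ofReal e
      rw [ENNReal.ofReal_mul (by positivity), ENNReal.ofReal_mul (by positivity)] at e'
      calc _ = (volume (ball (0 : Pt n) 1))⁻¹ * ENNReal.ofReal (a ^ 2) *
            (ENNReal.ofReal ((2:ℝ) ^ (2 * (k:ℝ) * α)) * ENNReal.ofReal ((rad r k ^ n)⁻¹)) := by ring
        _ = _ := by rw [e']; ring
    · rw [if_neg hk, if_neg hk]; simp
  simp_rw [hterm]
  rw [ENNReal.tsum_mul_left]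
  refine (mul_le_mul_right hsum _).trans (le_of_eq ?_)
  have e : (r ^ n)⁻¹ * a ^ 2 * (b / (b - 1) * (2 * r / d) ^ D) =
      b / (b - 1) * b * r ^ (2 * α) * (a ^ 2 / d ^ D) := by
    rw [Real.div_rpow (by positivity) hd, Real.mul_rpow (by norm_num) hr.le, ← hb_def, hD,
      Real.rpow_add hr, Real.rpow_natCast]
    field_simp
  have e' := congrArg ENNReal.ofReal e
  rw [ENNReal.ofReal_mul (by positivity), ENNReal.ofReal_mul (by positivity),
    ENNReal.ofReal_mul (q := a ^ 2 / d ^ D) (by positivity),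
    ENNReal.ofReal_mul (q := r ^ (2 * α)) (by positivity)] at e'
  calc _ = (volume (ball (0 : Pt n) 1))⁻¹ * (ENNReal.ofReal ((r ^ n)⁻¹) * ENNReal.ofReal (a ^ 2) *
        ENNReal.ofReal (b / (b - 1) * (2 * r / d) ^ D)) := by ring
    _ = _ := by rw [e']; ring

theorem upper_bound {n : ℕ} (hn : 1 ≤ n) {α q : ℝ} (hα : 0 < α) (hq : 0 < q) (hq2 : q ≤ 2) :
    ∃ C : ℝ≥0∞, C ≠ ⊤ ∧ ∀ u : Pt n → ℝ, Measurable u → ∀ (x₀ : Pt n) (r : ℝ), 0 < r →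
      Psi α q u x₀ r ≤ C * Phi α u x₀ (16 * r) := by
  set ω : ℝ≥0∞ := volume (ball (0 : Pt n) 1) with hω
  have hω0 : ω ≠ 0 := vol_ne_zero _ one_pos
  have hωt : ω ≠ ⊤ := vol_ne_top _ _
  have hωi : ω⁻¹ ≠ ⊤ := ENNReal.inv_ne_top.2 hω0
  set D : ℝ := (n : ℝ) + 2 * α with hD
  set E : ℝ≥0∞ := ENNReal.ofReal ((2:ℝ) ^ D / ((2:ℝ) ^ D - 1) * (2:ℝ) ^ D) with hE
  set η : ℝ≥0∞ := ω ^ (2 * α / (n : ℝ) - 1) with hη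
  have hηt : η ≠ ⊤ := ENNReal.rpow_ne_top_of_ne_zero hω0 hωt
  have hη0 : η ≠ 0 := by
    rw [hη, Ne, ENNReal.rpow_eq_zero_iff]
    simp [hω0, hωt]
  have hηi : η⁻¹ ≠ ⊤ := ENNReal.inv_ne_top.2 hη0
  refine ⟨ω⁻¹ * ω⁻¹ * E * ENNReal.ofReal ((16:ℝ) ^ (-(2 * α - n))) * η⁻¹, by finiteness, ?_⟩
  intro u hu x₀ r hr
  set B := ball x₀ (16 * r) with hB
  set I : ℝ≥0∞ := ∫⁻ x in B, ∫⁻ y in B, ENNReal.ofReal (|u x - u y| ^ 2 / ‖x - y‖ ^ D) with hI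
  let H : ℕ → Pt n → Pt n → ℝ≥0∞ := fun k w z => ENNReal.ofReal ((2:ℝ) ^ (2 * (k:ℝ) * α)) *
    ((volume (ball (0 : Pt n) (rad r k)))⁻¹ *
      (if dist z w < 2 * rad r k then ENNReal.ofReal (|u z - u w| ^ 2) else 0))
  have hH : ∀ k, Measurable fun p : Pt n × Pt n => H k p.1 p.2 := by
    intro k
    refine Measurable.const_mul (Measurable.const_mul (Measurable.ite ?_ (meas_diff hu)
      measurable_const) _) _
    exact measurableSet_lt (measurable_snd.dist measurable_fst) measurable_const
  have hsum : ∑' k : ℕ, ENNReal.ofReal ((2:ℝ) ^ (2 * (k:ℝ) * α)) *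
      ∫⁻ x in ball x₀ r, ⨅ c : ℝ, osc q u x (rad r k) c ≤
      ω⁻¹ * E * ENNReal.ofReal (r ^ (2 * α)) * I := by
    calc _ ≤ ∑' k : ℕ, ∫⁻ w in B, ∫⁻ z in B, H k w z := by
          refine ENNReal.tsum_le_tsum fun k => ?_
          have hp := rad_pos hr k
          have hv : (volume (ball (0 : Pt n) (rad r k)))⁻¹ ≠ ⊤ :=
            ENNReal.inv_ne_top.2 (vol_ne_zero _ hp)
          simp only [H]
          refine (mul_le_mul_right (lintegral_iInf_osc_le hq hq2 hu x₀ hp (rad_le hr k)) _).trans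
            (le_of_eq ?_)
          rw [← lintegral_const_mul' _ _ hv, ← lintegral_const_mul' _ _ ENNReal.ofReal_ne_top]
          refine lintegral_congr fun w => ?_
          rw [← lintegral_const_mul' _ _ hv, ← lintegral_const_mul' _ _ ENNReal.ofReal_ne_top]
      _ = ∫⁻ w in B, ∫⁻ z in B, ∑' k, H k w z := by
          rw [← lintegral_tsum fun k => (Measurable.lintegral_prod_right' (hH k)).aemeasurable]
          refine lintegral_congr fun w => ?_
          exact (lintegral_tsum fun k => ((hH k).comp measurable_prodMk_left).aemeasurable).symm
      _ ≤ ∫⁻ w in B, ∫⁻ z in B, ω⁻¹ * E * ENNReal.ofReal (r ^ (2 * α)) *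
            ENNReal.ofReal (|u w - u z| ^ 2 / ‖w - z‖ ^ D) := by
          gcongr with w z
          have := kernel_sum_le (n := n) (a := |u z - u w|) hα hr (dist_nonneg (x := z) (y := w))
            (by intro h; rw [dist_eq_zero.1 h]; simp)
          rw [← dist_eq_norm, dist_comm w z, abs_sub_comm (u w)]
          exact this
      _ = _ := by
          have hc : ω⁻¹ * E * ENNReal.ofReal (r ^ (2 * α)) ≠ ⊤ := by finiteness
          rw [hI, ← lintegral_const_mul' _ _ hc]
          refine lintegral_congr fun w => ?_
          rw [← lintegral_const_mul' _ _ hc]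
  rw [Psi_eq]
  refine (mul_le_mul_right hsum _).trans (le_of_eq ?_)
  unfold Phi
  rw [vol_rpow hn α x₀ (by positivity), vol_ball x₀ hr,
    ENNReal.mul_inv (Or.inr hωt) (Or.inl ENNReal.ofReal_ne_top),
    ← ENNReal.ofReal_inv_of_pos (by positivity)]
  have e : (r ^ n)⁻¹ * r ^ (2 * α) = (16:ℝ) ^ (-(2 * α - n)) * (16 * r) ^ (2 * α - n) := by
    rw [Real.mul_rpow (by norm_num) hr.le, ← mul_assoc, ← Real.rpow_add (by norm_num),
      neg_add_cancel, Real.rpow_zero, one_mul, Real.rpow_sub hr, Real.rpow_natCast]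
    field_simp
  have e' := congrArg ENNReal.ofReal e
  rw [ENNReal.ofReal_mul (by positivity), ENNReal.ofReal_mul (by positivity)] at e'
  calc _ = ω⁻¹ * ω⁻¹ * E * (ENNReal.ofReal ((r ^ n)⁻¹) * ENNReal.ofReal (r ^ (2 * α))) * I := by
        ring
    _ = ω⁻¹ * ω⁻¹ * E * (ENNReal.ofReal ((16:ℝ) ^ (-(2 * α - n))) *
          ENNReal.ofReal ((16 * r) ^ (2 * α - n))) * (η⁻¹ * η) * I := by
        rw [e', ENNReal.inv_mul_cancel hη0 hηt, mul_one]
    _ = _ := by ring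

/-! ### The two-sided comparison -/

/-- for `α ∈ (0,1)` and `q ∈ (0,2]` there is `C > 0` (depending only on `n`,
`α`, `q`) with `C⁻¹ Φ_α(u, B(x₀, r/16)) ≤ Ψ_{α,q}(u, B(x₀,r)) ≤ C Φ_α(u, B(x₀, 16r))`
for every measurable `u` and every ball. -/
theorem Phi_Psi_comparison (n : ℕ) (hn : 1 ≤ n) (α q : ℝ)
    (hα : α ∈ Ioo (0:ℝ) 1) (hq : q ∈ Ioc (0:ℝ) 2) :
    ∃ C > (0:ℝ), ∀ u : Pt n → ℝ, Measurable u → ∀ (x₀ : Pt n) (r : ℝ), 0 < r →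
      Phi α u x₀ (r / 16) ≤ ENNReal.ofReal C * Psi α q u x₀ r ∧
      Psi α q u x₀ r ≤ ENNReal.ofReal C * Phi α u x₀ (16 * r) := by

  obtain ⟨C₁, h₁, H₁⟩ := lower_bound hn hα.1 hq.1
  obtain ⟨C₂, h₂, H₂⟩ := upper_bound hn hα.1 hq.1 hq.2
  have hC : C₁ + C₂ + 1 ≠ ⊤ := by finiteness
  refine ⟨(C₁ + C₂ + 1).toReal, ENNReal.toReal_pos (by simp) hC, fun u hu x₀ r hr => ?_⟩
  rw [ENNReal.ofReal_toReal hC]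
  refine ⟨(H₁ u hu x₀ r hr).trans ?_, (H₂ u hu x₀ r hr).trans ?_⟩
  · gcongr
    rw [add_assoc]
    exact le_self_add
  · gcongr
    exact le_add_self.trans le_self_add

end
end

section
/- Let n ≥ 2 and let f : ℝⁿ → ℝⁿ be a homeomorphism that is η-quasisymmetric for some homeomorphism η : [0,∞) → [0,∞), and suppose f maps the hyperplane H = ℝ^{n−1}×{0} onto itself. Then there exists a constant C ≥ 1 depending only on η such that for every z₀ ∈ ℝⁿ \ H, every r with 0 < r ≤ dist(z₀,H)/2, and every z ∈ B(z₀,r): C⁻¹ dist(f(z₀), H) ≤ dist(f(z), H) ≤ C dist(f(z₀), H). -/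
/-!
Let `H` be the hyperplane, so that `f '' H = H`. If `p ∉ H` and `q` is no farther from
`p` than `H` is, then for every `w ∈ H` quasisymmetry at `p` gives
`|f p - f q| ≤ η(|p - q| / |p - w|) |f p - f w| ≤ η(1) |f p - f w|`. Taking the infimum over
`w ∈ H`, whose images fill `H`, yields `|f p - f q| ≤ η(1) dist(f p, H)`, hence
`dist(f q, H) ≤ (1 + η(1)) dist(f p, H)` (`infDist_image_le`). On a ball `B(z₀, r)` with
`r ≤ dist(z₀, H) / 2` this applies with `(p, q)` equal to both `(z₀, z)` and `(z, z₀)`,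
so `C = 1 + η(1)` works.
-/

open MeasureTheory Metric Filter Set ENNReal NNReal

noncomputable section

/-- One-sided comparison: the distance to `f '' H` grows by a factor of at most `1 + η 1` when
passing from `f p` to `f q`, provided `q` is no farther from `p` than any point of `H`. -/
theorem infDist_image_le {n : ℕ} {η : ℝ≥0 ≃o ℝ≥0} {f : Pt n → Pt n} (hf : IsQS f η)
    {H : Set (Pt n)} (hne : H.Nonempty) (hH : f '' H = H) {p q : Pt n} (hp : p ∉ H)
    (hpq : ∀ w ∈ H, dist p q ≤ dist p w) :
    infDist (f q) H ≤ (1 + (η 1 : ℝ)) * infDist (f p) H := by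
  have key : ∀ w ∈ H, dist (f p) (f q) ≤ η 1 * dist (f p) (f w) := by
    intro w hw
    have hratio : nndist p q / nndist p w ≤ 1 := div_le_one_of_le₀ (hpq w hw) zero_le
    have h : nndist (f p) (f q) ≤ η 1 * nndist (f p) (f w) :=
      (hf p q w (fun h => hp (h ▸ hw))).trans
        (mul_le_mul_left (η.monotone hratio) _)
    exact_mod_cast h
  have hdist : infDist (f q) H ≤ infDist (f p) H + dist (f p) (f q) := by
    rw [dist_comm]
    exact infDist_le_infDist_add_dist
  have hη : (0 : ℝ) < η 1 := by
    have h : η 0 < η 1 := η.strictMono zero_lt_one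
    exact_mod_cast zero_le.trans_lt h
  have hinf : dist (f p) (f q) / η 1 ≤ infDist (f p) H := by
    refine (le_infDist hne).2 fun y hy => ?_
    obtain ⟨w, hw, rfl⟩ := hH.symm ▸ hy
    rw [div_le_iff₀' hη]
    exact key w hw
  rw [div_le_iff₀' hη] at hinf
  linarith

/-- if a quasisymmetric homeomorphism of `ℝⁿ` maps the hyperplane
`H = ℝ^{n-1} × {0}` onto itself, then on Whitney-type balls the distance of the image to
`H` is essentially constant, with a constant depending only on `η`. -/
theorem dist_image_hyperplane_comparable (n : ℕ) (hn : 2 ≤ n) (η : ℝ≥0 ≃o ℝ≥0) :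
    ∃ C ≥ (1:ℝ), ∀ f : Pt n ≃ₜ Pt n, IsQS (⇑f) η → (⇑f) '' Hset n = Hset n →
      ∀ z₀ : Pt n, z₀ ∉ Hset n → ∀ r : ℝ, 0 < r → r ≤ Metric.infDist z₀ (Hset n) / 2 →
        ∀ z ∈ ball z₀ r,
          C⁻¹ * Metric.infDist (f z₀) (Hset n) ≤ Metric.infDist (f z) (Hset n) ∧
          Metric.infDist (f z) (Hset n) ≤ C * Metric.infDist (f z₀) (Hset n) := by
  refine ⟨1 + (η 1 : ℝ), le_add_of_nonneg_right (η 1).coe_nonneg, ?_⟩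
  intro f hf hH z₀ hz₀ r hr hrd z hz
  have hne : (Hset n).Nonempty := ⟨0, fun i _ => rfl⟩
  have hpos : (0 : ℝ) < 1 + (η 1 : ℝ) := by positivity
  rw [mem_ball] at hz
  have hz₀w : ∀ w ∈ Hset n, infDist z₀ (Hset n) ≤ dist z₀ w := fun w hw => infDist_le_dist_of_mem hw
  have hzH : z ∉ Hset n := by
    intro h
    have := hz₀w z h
    rw [dist_comm] at this
    linarith
  constructor
  · rw [inv_mul_le_iff₀ hpos]
    refine infDist_image_le hf hne hH hzH fun w hw => ?_
    have h1 := hz₀w w hw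
    have h2 := dist_triangle_left z₀ w z
    linarith
  · refine infDist_image_le hf hne hH hz₀ fun w hw => ?_
    have h1 := hz₀w w hw
    rw [dist_comm z₀ z]
    linarith

end
end
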